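/- arXiv:2010.12564 — 5 statements merged into one kernel-verified Lean document; each statement's English description precedes it below -/
import Mathlib

section
/- Let R be an integral domain of mixed characteristic p (i.e., R has characteristic 0 and p lies in every maximal ideal of R) and let I ⊆ R be an ideal. Then the epf closure of I·R^+ computed in R^+ equals the union of the epf closures (I·S)^epf over all intermediate rings R ⊆ S ⊆ R^+ that are module-finite over R; that is, (I R^+)^epf = ⋃_S (I S)^epf, where each (I S)^epf is computed in S using the identification S^+ = R^+. -/
open IsLocalRing TensorProduct
set_option synthInstance.maxHeartbeats 1000000
set_option maxHeartbeats 1000000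

/-- The absolute integral closure `R⁺` of a domain `R`: the integral closure of `R`
in an algebraic closure of its fraction field. -/
noncomputable abbrev RPlus (R : Type) [CommRing R] [IsDomain R] : Type :=
  ↥(integralClosure R (AlgebraicClosure (FractionRing R)))

/-- The epf closure of an ideal `J` of `R⁺`, computed in `R⁺`: `u` is in the closure iff
there is `c ≠ 0` in `R⁺` such that `d * u ∈ J + p^N R⁺` for all `N ≥ 1` and all
`n`-th roots `d` of `c` (`n ≥ 1`). -/
def epfPlus (p : ℕ) (R : Type) [CommRing R] [IsDomain R] (J : Ideal (RPlus R)) :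
    Set (RPlus R) :=
  {u | ∃ c : RPlus R, c ≠ 0 ∧ ∀ n N : ℕ, 0 < n → 0 < N →
    ∀ d : RPlus R, d ^ n = c → d * u ∈ J ⊔ Ideal.span {(p : RPlus R) ^ N}}

section IntegralAlgebra

variable (R : Type*) {A : Type*} [CommRing R] [CommRing A] [Algebra R A] [Algebra.IsIntegral R A]

theorem exists_finite_subalgebra_superset {s : Set A} (hs : s.Finite) :
    ∃ S : Subalgebra R A, Module.Finite R S ∧ s ⊆ S :=
  ⟨Algebra.adjoin R s,
    Algebra.finite_adjoin_of_finite_of_isIntegral hs fun x _ ↦ Algebra.IsIntegral.isIntegral x,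
    Algebra.subset_adjoin⟩

theorem setOf_exists_eq_iUnion_finite_subalgebra (P : A → A → Prop) :
    {u | ∃ c, P u c} =
      ⋃ (S : Subalgebra R A) (_ : Module.Finite R S), {u | u ∈ S ∧ ∃ c ∈ S, P u c} := by
  ext u
  simp only [Set.mem_iUnion, Set.mem_ofPred_eq]
  constructor
  · rintro ⟨c, hc⟩
    obtain ⟨S, hS, huc⟩ := exists_finite_subalgebra_superset R (Set.toFinite {u, c})
    exact ⟨S, hS, huc (by simp), c, huc (by simp), hc⟩
  · rintro ⟨_, _, _, c, _, hc⟩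
    exact ⟨c, hc⟩

end IntegralAlgebra

theorem stmt0_general (R : Type) [CommRing R] [IsDomain R] (p : ℕ) (J : Ideal (RPlus R)) :
    epfPlus p R J =
      ⋃ (S : Subalgebra R (RPlus R)) (_ : Module.Finite R S),
        {u : RPlus R | u ∈ S ∧ ∃ c : RPlus R, c ∈ S ∧ c ≠ 0 ∧
          ∀ n N : ℕ, 0 < n → 0 < N → ∀ d : RPlus R, d ^ n = c →
            d * u ∈ J ⊔ Ideal.span {(p : RPlus R) ^ N}} :=
  setOf_exists_eq_iUnion_finite_subalgebra R _

/-- For a domain `R` of mixed characteristic `p`, the epf closure of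
`I R⁺` in `R⁺` is the union of the epf closures `(I S)^epf` over all intermediate
rings `R ⊆ S ⊆ R⁺` module-finite over `R` (computed using `S⁺ = R⁺`). -/
theorem stmt0 (R : Type) [CommRing R] [IsDomain R]
    (p : ℕ) [Fact p.Prime] [CharZero R]
    (hp : ∀ m : Ideal R, m.IsMaximal → (p : R) ∈ m)
    (I : Ideal R) :
    epfPlus p R (Ideal.map (algebraMap R (RPlus R)) I) =
      ⋃ (S : Subalgebra R (RPlus R)) (_ : Module.Finite R S),
        {u : RPlus R | u ∈ S ∧ ∃ c : RPlus R, c ∈ S ∧ c ≠ 0 ∧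
          ∀ n N : ℕ, 0 < n → 0 < N → ∀ d : RPlus R, d ^ n = c →
            d * u ∈ Ideal.map (algebraMap R (RPlus R)) I ⊔
              Ideal.span {(p : RPlus R) ^ N}} :=
  stmt0_general R p _
end

section
/- Let R ⊆ S be a module-finite extension of complete Noetherian local domains of mixed characteristic p, where the residue field of R is F-finite. Suppose given R-linear maps ν : R^{n_1} → R^{n_0}, σ : R^{n_0} → S, and φ : R^{n_1} → R such that: the composite of σ with the projection S → S/R is surjective onto S/R with kernel of the composite R^{n_0} → S/R equal to the image of ν, and σ ∘ ν = ι ∘ φ where ι : R → S is the inclusion. Identify Hom_R(R^{n_1}, R) with R^{n_1} and let φ^∨ ∈ R^{n_1} be the element corresponding to φ, and let ν^∨ : R^{n_0} → R^{n_1} be the transpose of ν. Then φ^∨ lies in the epf closure (ν^∨(R^{n_0}))^epf_{R^{n_1}} of the submodule ν^∨(R^{n_0}) inside the free module R^{n_1}. (Every module-finite extension of such rings is epf-phantom.) -/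
open IsLocalRing TensorProduct
set_option synthInstance.maxHeartbeats 1000000
set_option maxHeartbeats 1000000

/-- The epf closure of a submodule `W` of an `R`-module `M`: `u` is in the closure iff
there is `c ≠ 0` in `R` such that `d ⊗ u ∈ im(R⁺ ⊗ W → R⁺ ⊗ M) + p^N (R⁺ ⊗ M)` for all
`N ≥ 1` and all `n`-th roots `d ∈ R⁺` of `c` (`n ≥ 1`). -/
def epfMod (p : ℕ) (R : Type) [CommRing R] [IsDomain R]
    {M : Type} [AddCommGroup M] [Module R M] (W : Submodule R M) : Set M :=
  {u | ∃ c : R, c ≠ 0 ∧ ∀ n N : ℕ, 0 < n → 0 < N →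
    ∀ d : RPlus R, d ^ n = algebraMap R (RPlus R) c →
      d ⊗ₜ[R] u ∈ LinearMap.range (LinearMap.baseChange (RPlus R) W.subtype) ⊔
        Ideal.span {(p : RPlus R) ^ N} • (⊤ : Submodule (RPlus R) (RPlus R ⊗[R] M))}

/-- A field `k` of characteristic `p` is F-finite if it is a finite module over
its subfield `k^p` of `p`-th powers. -/
def FFinite (p : ℕ) (k : Type) [Field k] : Prop :=
  ∃ (m : ℕ) (s : Fin m → k), ∀ a : k, ∃ c : Fin m → k, a = ∑ i, (c i) ^ p * s i

/-! An integral extension `S` of `R`, divided by a prime over zero, embeds in `R⁺` over `R`.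
Composing `σ` with the resulting map `S → R⁺` gives `ψ : R^{n₀} → R⁺` with `ψ ∘ ν = φ`, and reading
this equation on the standard basis writes `1 ⊗ φ^∨` as an `R⁺`-combination of the generators of
the image of `ν^∨`. So `φ^∨` already lies in the plus closure of that image, and the multiplier
`c = 1` witnesses membership in the epf closure. -/

section BaseChangeClosure

variable {R M : Type*} [CommSemiring R] [AddCommMonoid M] [Module R M]

/-- The closure of a submodule `W` of `M` induced by an `R`-algebra `B`: the elements of `M` whose
image in `B ⊗ M` lies in the `B`-submodule generated by `W`. For `B = R⁺` it is the plus closure. -/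
def baseChangeClosure (B : Type*) [Semiring B] [Algebra R B] (W : Submodule R M) :
    Submodule R M :=
  ((W.baseChange B).restrictScalars R).comap (TensorProduct.mk R B M 1)

variable {B : Type*} [Semiring B] [Algebra R B] {W : Submodule R M} {u : M}

theorem mem_baseChangeClosure_iff : u ∈ baseChangeClosure B W ↔ 1 ⊗ₜ[R] u ∈ W.baseChange B :=
  Iff.rfl

theorem tmul_mem_baseChange_of_mem_baseChangeClosure (hu : u ∈ baseChangeClosure B W) (b : B) :
    b ⊗ₜ[R] u ∈ W.baseChange B := by
  simpa only [TensorProduct.smul_tmul', smul_eq_mul, mul_one] using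
    (W.baseChange B).smul_mem b (mem_baseChangeClosure_iff.mp hu)

theorem mem_baseChangeClosure_span_range_of_eq_sum {κ : Type*} [Fintype κ] {w : κ → M} (b : κ → B)
    (hu : 1 ⊗ₜ[R] u = ∑ j, b j ⊗ₜ[R] w j) :
    u ∈ baseChangeClosure B (Submodule.span R (Set.range w)) := by
  rw [mem_baseChangeClosure_iff, hu]
  exact Submodule.sum_mem _ fun j _ =>
    Submodule.tmul_mem_baseChange_of_mem _ (Submodule.subset_span ⟨j, rfl⟩)

theorem coords_mem_baseChangeClosure_of_comp_eq {ι κ : Type*} [Finite ι] [DecidableEq ι]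
    [Finite κ] {ν : (ι → R) →ₗ[R] (κ → R)} {φ : (ι → R) →ₗ[R] R}
    (ψ : (κ → R) →ₗ[R] B) (hψ : ψ.comp ν = (Algebra.linearMap R B).comp φ) :
    (fun i => φ (Pi.single i 1)) ∈ baseChangeClosure B
      (Submodule.span R (Set.range fun j i => ν (Pi.single i 1) j)) := by
  classical
  cases nonempty_fintype ι
  cases nonempty_fintype κ
  refine mem_baseChangeClosure_span_range_of_eq_sum (fun j => ψ (Pi.single j 1)) ?_
  have coordinates (i : ι) : algebraMap R B (φ (Pi.single i 1)) =
      ∑ j, ν (Pi.single i 1) j • ψ (Pi.single j 1) :=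
    calc algebraMap R B (φ (Pi.single i 1))
      _ = ψ (ν (Pi.single i 1)) := (LinearMap.congr_fun hψ (Pi.single i 1)).symm
      _ = ∑ j, ν (Pi.single i 1) j • ψ (Pi.single j 1) := by
        conv_lhs => rw [pi_eq_sum_univ' (ν (Pi.single i 1)), map_sum]
        simp only [map_smul]
  apply (TensorProduct.piScalarRight R R B ι).injective
  ext i
  simpa [Algebra.algebraMap_eq_smul_one] using coordinates i

end BaseChangeClosure

theorem baseChangeClosure_RPlus_subset_epfMod (p : ℕ) {R : Type} [CommRing R] [IsDomain R]
    {M : Type} [AddCommGroup M] [Module R M] (W : Submodule R M) :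
    (baseChangeClosure (RPlus R) W : Set M) ⊆ epfMod p R W :=
  fun _ hu => ⟨1, one_ne_zero, fun _ _ _ _ d _ =>
    Submodule.mem_sup_left (tmul_mem_baseChange_of_mem_baseChangeClosure hu d)⟩

section Embedding

variable (R S K : Type*) [CommRing R] [IsDomain R] [CommRing S] [Algebra R S]
  [Algebra.IsIntegral R S] [FaithfulSMul R S] [Field K] [IsAlgClosed K] [Algebra R K]
  [FaithfulSMul R K]

theorem nonempty_algHom_of_isIntegral_of_isAlgClosed : Nonempty (S →ₐ[R] K) := by
  obtain ⟨Q, hQ, hQ_over⟩ := Ideal.nonempty_primesOver (S := S) (⊥ : Ideal R)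
  have : FaithfulSMul R (S ⧸ Q) := by
    rw [faithfulSMul_iff_algebraMap_injective, injective_iff_map_eq_zero]
    intro r hr
    exact (Q.mem_of_liesOver ⊥ r).mpr (Ideal.Quotient.eq_zero_iff_mem.mp hr)
  exact ⟨(IsAlgClosed.lift : S ⧸ Q →ₐ[R] K).comp (Ideal.Quotient.mkₐ R Q)⟩

theorem nonempty_algHom_integralClosure : Nonempty (S →ₐ[R] integralClosure R K) :=
  (nonempty_algHom_of_isIntegral_of_isAlgClosed R S K).map fun f =>
    f.codRestrict _ fun s => (Algebra.IsIntegral.isIntegral s).map f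

end Embedding

theorem stmt7_general {R : Type} {S ι κ : Type*} [CommRing R] [IsDomain R] [CommRing S]
    [Algebra R S] [Algebra.IsIntegral R S] [FaithfulSMul R S] [Finite ι] [DecidableEq ι] [Finite κ]
    {ν : (ι → R) →ₗ[R] (κ → R)} (σ : (κ → R) →ₗ[R] S) {φ : (ι → R) →ₗ[R] R}
    (hcomm : σ.comp ν = (Algebra.linearMap R S).comp φ) :
    (fun i => φ (Pi.single i 1)) ∈ baseChangeClosure (RPlus R)
      (Submodule.span R (Set.range fun j i => ν (Pi.single i 1) j)) := by
  have : FaithfulSMul R (AlgebraicClosure (FractionRing R)) := .trans R (FractionRing R) _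
  obtain ⟨θ⟩ := nonempty_algHom_integralClosure R S (AlgebraicClosure (FractionRing R))
  refine coords_mem_baseChangeClosure_of_comp_eq (θ.toLinearMap.comp σ) ?_
  rw [LinearMap.comp_assoc, hcomm, ← LinearMap.comp_assoc]
  congr 1
  ext
  simp

/-- Every module-finite extension `R → S` of complete local domains of mixed
characteristic `p` (with F-finite residue field of `R`) is epf-phantom: with a presentation
`R^{n₁} --ν--> R^{n₀} → S/R → 0` lifting the extension via `σ` and `φ`, the element
`φ^∨` lies in the epf closure of the column space of `ν^∨` in `R^{n₁}`. -/
theorem stmt7 (R S : Type) [CommRing R] [IsDomain R] [IsNoetherianRing R] [IsLocalRing R]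
    [IsAdicComplete (maximalIdeal R) R]
    [CommRing S] [IsDomain S] [IsNoetherianRing S] [IsLocalRing S]
    [IsAdicComplete (maximalIdeal S) S]
    [Algebra R S] (hinj : Function.Injective (algebraMap R S)) [Module.Finite R S]
    (p : ℕ) [Fact p.Prime] [CharZero R] [CharZero S]
    (hpR : (p : R) ∈ maximalIdeal R) (hpS : (p : S) ∈ maximalIdeal S)
    (hk : FFinite p (ResidueField R))
    (n₀ n₁ : ℕ)
    (ν : (Fin n₁ → R) →ₗ[R] (Fin n₀ → R))
    (σ : (Fin n₀ → R) →ₗ[R] S)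
    (φ : (Fin n₁ → R) →ₗ[R] R)
    (hsurj : Function.Surjective
      ((LinearMap.range (Algebra.linearMap R S)).mkQ.comp σ))
    (hker : LinearMap.ker ((LinearMap.range (Algebra.linearMap R S)).mkQ.comp σ) =
      LinearMap.range ν)
    (hcomm : σ.comp ν = (Algebra.linearMap R S).comp φ) :
    (fun i => φ (Pi.single i 1)) ∈
      epfMod p R (Submodule.span R
        (Set.range (fun j : Fin n₀ => fun i : Fin n₁ => ν (Pi.single i 1) j))) := by
  have : FaithfulSMul R S := (faithfulSMul_iff_algebraMap_injective R S).mpr hinj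
  exact baseChangeClosure_RPlus_subset_epfMod p _ (stmt7_general σ hcomm)
end

section
/- Let (R, m) be a complete Noetherian local domain of prime characteristic p, let R^+ be its absolute integral closure, let x_1, …, x_n be part of a system of parameters of R, and let J be a proper finitely generated ideal of R^+. Then ⋂_{N ≥ 1} ((x_1, …, x_n)R^+ + J^N) = (x_1, …, x_n)R^+. -/
open IsLocalRing TensorProduct
set_option synthInstance.maxHeartbeats 1000000
set_option maxHeartbeats 1000000

/-- A system of parameters of a local ring: `d` elements generating an ideal whose
radical is the maximal ideal, where `d` is the Krull dimension. -/
def IsSOP (R : Type) [CommRing R] [IsLocalRing R] {d : ℕ} (x : Fin d → R) : Prop :=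
  ringKrullDim R = d ∧ (Ideal.span (Set.range x)).radical = maximalIdeal R

/-- Part of a system of parameters: a sequence extendable to a full system of parameters. -/
def IsPartialSOP (R : Type) [CommRing R] [IsLocalRing R] {n : ℕ} (x : Fin n → R) : Prop :=
  ∃ (d : ℕ) (hd : n ≤ d) (y : Fin d → R), IsSOP R y ∧ ∀ i : Fin n, y (Fin.castLE hd i) = x i

/-!
By Cohen's structure theorem `R` is finite over a power series ring `A = k⟦y⟧` in which the `xᵢ`
are some of the variables, and `T = R⁺` is the integral closure of `A` in an algebraic closure `Ω`
of `K = Frac A`. Since `T` is a union of domains finite over the complete local ring `A`, a power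
of `J` lies in `m_A T`, so it suffices to show `⋂ (I + m_A ^ N) T = I T` for every ideal `I` of `A`.

Let `w` in the left-hand side be separable over `K`. The `A`-linear functionals `g` on `A[w]` with
`g (w ^ p ^ e) ∈ I^[p ^ e]` for all `e` include the trace functionals `v ↦ Tr (w ^ i * v)`, because
the trace commutes with Frobenius, tight closure is trivial in `A`, and Krull's intersection theorem
holds in `A`. They are also stable under `g ↦ θ ∘ g ∘ F` for every `p⁻¹`-linear `θ : A → A`. As
finitely many elements of `F_* A` can be reconstructed from their images under such `θ`, generators
`gᵢ` of the module of these functionals satisfy `gᵢ (r ^ p) = ∑ⱼ cⱼᵢ * gⱼ r ^ p` with `cⱼᵢ ∈ A`.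
The nondegeneracy of the trace gives `t` in `Ω` with `∑ⱼ tⱼ * gⱼ r = r` for all `r ∈ A[w]`, and
Lang's theorem lets us choose it with `tⱼ ^ p = ∑ᵢ cⱼᵢ * tᵢ`. Such `tⱼ` are integral over `A`,
hence `w = ∑ⱼ tⱼ * gⱼ w ∈ I T`. For a general `u`, apply this to a separable `u ^ p ^ e` and the
ideal `I^[p ^ e]`, and extract `p ^ e`-th roots in the perfect ring `T`.
-/

theorem mem_of_forall_mem_sup_maximalIdeal_pow_smul_top {A M : Type*} [CommRing A]
    [IsNoetherianRing A] [IsLocalRing A] [AddCommGroup M] [Module A M] [Module.Finite A M]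
    {N : Submodule A M} {x : M} (h : ∀ t, x ∈ N ⊔ maximalIdeal A ^ t • ⊤) : x ∈ N := by
  rw [← Submodule.Quotient.mk_eq_zero N]
  refine IsHausdorff.haus (I := maximalIdeal A) inferInstance _ fun t => ?_
  rw [SModEq.zero]
  have hx := Submodule.mem_map_of_mem (f := N.mkQ) (h t)
  rw [Submodule.map_sup, Submodule.map_smul'', Submodule.mkQ_map_self, bot_sup_eq] at hx
  exact Submodule.smul_mono le_rfl le_top hx

/-! ### Cartier-linear maps and Frobenius powers -/

/-- A `p⁻¹`-linear (Cartier-linear) map: an additive map `ψ` with `ψ (a ^ p • m) = a • ψ m`.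
This is an `A`-linear map `F_* M → N`, stated without the Frobenius pushforward. -/
def IsCartierLinear (p : ℕ) (A : Type*) {M N : Type*} [CommRing A] [AddCommGroup M] [Module A M]
    [AddCommGroup N] [Module A N] (ψ : M →+ N) : Prop :=
  ∀ (a : A) (m : M), ψ (a ^ p • m) = a • ψ m

/-- `F_* A` is locally projective as an `A`-module, in the sense of Zimmermann-Huisgen: finitely
many elements can be reconstructed from their images under finitely many `p⁻¹`-linear maps
`θ : A → A`. The `p`-th power in `∑ c * θ a ^ p` is the scalar multiplication of `A` on `F_* A`
by `θ a`, and the span supplies the coefficients `c ∈ F_* A`. Unlike freeness of `F_* A`, this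
holds for power series rings over every field. -/
def IsFrobeniusLocallyProjective (p : ℕ) (A : Type*) [CommRing A] : Prop :=
  ∀ (l : ℕ) (a : Fin l → A),
    a ∈ Submodule.span A {v | ∃ θ : A →+ A, IsCartierLinear p A θ ∧ v = fun i => θ (a i) ^ p}

/-- The Frobenius power `J^[p ^ e]`, generated by the `p ^ e`-th powers of elements of `J`. -/
noncomputable def frobeniusPower (p : ℕ) {A : Type*} [CommRing A] [ExpChar A p]
    (J : Ideal A) (e : ℕ) : Ideal A :=
  J.map (iterateFrobenius A p e)

/-- The multipliers `c` witnessing that `a` lies in the tight closure of `J`, required in every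
degree: `c * a ^ p ^ e ∈ J^[p ^ e]` for all `e`. -/
noncomputable def tightMultipliers (p : ℕ) {A : Type*} [CommRing A] [ExpChar A p]
    (J : Ideal A) (a : A) : Ideal A :=
  ⨅ e, Submodule.comap (LinearMap.mulRight A (a ^ p ^ e)) (frobeniusPower p J e)

section FrobeniusPower

variable {p : ℕ} {A : Type*} [CommRing A] [ExpChar A p] {J : Ideal A}

theorem pow_mem_frobeniusPower {j : A} (hj : j ∈ J) (e : ℕ) : j ^ p ^ e ∈ frobeniusPower p J e :=
  Ideal.mem_map_of_mem _ hj

theorem frobeniusPower_zero (J : Ideal A) : frobeniusPower p J 0 = J := by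
  rw [frobeniusPower, iterateFrobenius_zero, Ideal.map_id]

theorem frobeniusPower_span_singleton_mul (b : A) (J : Ideal A) (e : ℕ) :
    frobeniusPower p (Ideal.span {b} * J) e = Ideal.span {b ^ p ^ e} * frobeniusPower p J e := by
  simp only [frobeniusPower, Ideal.map_mul, Ideal.map_span, Set.image_singleton,
    iterateFrobenius_def]

theorem IsCartierLinear.map_mem_frobeniusPower {θ : A →+ A} (hθ : IsCartierLinear p A θ) {e : ℕ}
    {a : A} (ha : a ∈ frobeniusPower p J (e + 1)) : θ a ∈ frobeniusPower p J e := by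
  refine Submodule.closure_induction (p := fun x _ => θ x ∈ frobeniusPower p J e)
    (by simp) (fun x y _ _ hx hy => by rw [map_add]; exact add_mem hx hy) ?_ ha
  rintro r _ ⟨j, hj, rfl⟩
  have hr : r • iterateFrobenius A p (e + 1) j = (j ^ p ^ e) ^ p • r := by
    rw [iterateFrobenius_def, smul_eq_mul, smul_eq_mul, mul_comm, ← pow_mul, pow_succ]
  rw [hr, hθ]
  exact Ideal.mul_mem_right _ _ (pow_mem_frobeniusPower hj e)

theorem frobeniusPower_sup (J J' : Ideal A) (e : ℕ) :
    frobeniusPower p (J ⊔ J') e = frobeniusPower p J e ⊔ frobeniusPower p J' e :=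
  Ideal.map_sup _ J J'

theorem frobeniusPower_le_pow (J : Ideal A) (e : ℕ) : frobeniusPower p J e ≤ J ^ p ^ e :=
  Ideal.map_le_iff_le_comap.2 fun _ hj => Ideal.pow_mem_pow hj _

theorem mem_tightMultipliers {a c : A} :
    c ∈ tightMultipliers p J a ↔ ∀ e, c * a ^ p ^ e ∈ frobeniusPower p J e := by
  simp [tightMultipliers]

theorem IsCartierLinear.map_mem_tightMultipliers {θ : A →+ A} (hθ : IsCartierLinear p A θ)
    {a c : A} (hc : c ∈ tightMultipliers p J a) : θ c ∈ tightMultipliers p J a := by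
  rw [mem_tightMultipliers] at hc ⊢
  intro e
  have hθc : θ c * a ^ p ^ e = θ (c * a ^ p ^ (e + 1)) := by
    rw [mul_comm, mul_comm c, pow_succ, pow_mul, ← smul_eq_mul, ← smul_eq_mul, hθ]
  rw [hθc]
  exact hθ.map_mem_frobeniusPower (hc (e + 1))

end FrobeniusPower

namespace IsFrobeniusLocallyProjective

variable {p : ℕ} {A : Type*} [CommRing A]

theorem mem_span_pow (hA : IsFrobeniusLocallyProjective p A) (a : A) :
    a ∈ Ideal.span {v | ∃ θ : A →+ A, IsCartierLinear p A θ ∧ v = θ a ^ p} := by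
  have h := Submodule.mem_map_of_mem (f := LinearMap.proj 0) (hA 1 fun _ => a)
  rw [Submodule.map_span] at h
  refine Submodule.span_mono ?_ h
  rintro _ ⟨v, ⟨θ, hθ, rfl⟩, rfl⟩
  exact ⟨θ, hθ, rfl⟩

theorem eq_bot_of_cartier_stable [IsNoetherianRing A] [IsLocalRing A]
    (hA : IsFrobeniusLocallyProjective p A) (hp : 2 ≤ p) {N : Ideal A} (hN : N ≠ ⊤)
    (hstable : ∀ θ : A →+ A, IsCartierLinear p A θ → ∀ n ∈ N, θ n ∈ N) : N = ⊥ := by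
  have hle : ∀ k, N ≤ maximalIdeal A ^ (k + 1) := by
    intro k
    induction k with
    | zero => simpa using le_maximalIdeal hN
    | succ k ih =>
      intro n hn
      refine (Ideal.span_le.2 ?_ : Ideal.span _ ≤ maximalIdeal A ^ (k + 1 + 1)) (hA.mem_span_pow n)
      rintro _ ⟨θ, hθ, rfl⟩
      have hθn := Ideal.pow_mem_pow (ih (hstable θ hθ n hn)) p
      rw [← pow_mul] at hθn
      exact Ideal.pow_le_pow_right (by nlinarith) hθn
  rw [eq_bot_iff, ← Ideal.iInf_pow_eq_bot_of_isLocalRing (maximalIdeal A) Ideal.IsPrime.ne_top']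
  exact le_iInf fun k => (hle k).trans (Ideal.pow_le_pow_right k.le_succ)

theorem mem_of_forall_mul_pow_mem [IsNoetherianRing A] [IsLocalRing A]
    [Fact p.Prime] [CharP A p] (hA : IsFrobeniusLocallyProjective p A) {J : Ideal A} {a c : A}
    (hc : c ≠ 0) (h : ∀ e, c * a ^ p ^ e ∈ frobeniusPower p J e) : a ∈ J := by
  have htop : tightMultipliers p J a = ⊤ := by
    by_contra htop
    have hbot := hA.eq_bot_of_cartier_stable (Fact.out : p.Prime).two_le htop
      fun θ hθ n => hθ.map_mem_tightMultipliers
    exact hc (by simpa [hbot] using mem_tightMultipliers.2 h)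
  simpa [frobeniusPower_zero] using
    mem_tightMultipliers.1 ((Ideal.eq_top_iff_one _).1 htop) 0

end IsFrobeniusLocallyProjective

section IntegralExtension

variable {p : ℕ} {A T : Type*} [CommRing A] [CommRing T] [Algebra A T]

theorem exists_fg_forall_pow_mem_frobeniusPower_smul [ExpChar A p] [ExpChar T p]
    [Algebra.IsIntegral A T] {J : Ideal A} {v : T} (hv : v ∈ J.map (algebraMap A T)) :
    ∃ M : Submodule A T, M.FG ∧ ∀ e, v ^ p ^ e ∈ frobeniusPower p J e • M := by
  refine Submodule.closure_induction
    (p := fun v _ => ∃ M : Submodule A T, M.FG ∧ ∀ e, v ^ p ^ e ∈ frobeniusPower p J e • M)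
    ?_ ?_ ?_ hv
  · exact ⟨⊥, Submodule.fg_bot, fun e => by simp [zero_pow (expChar_pow_pos T p e).ne']⟩
  · rintro x y - - ⟨M, hM, hx⟩ ⟨M', hM', hy⟩
    refine ⟨M ⊔ M', hM.sup hM', fun e => ?_⟩
    rw [add_pow_expChar_pow, Submodule.smul_sup]
    exact Submodule.add_mem_sup (hx e) (hy e)
  · rintro t _ ⟨j, hj, rfl⟩
    refine ⟨Subalgebra.toSubmodule (Algebra.adjoin A {t}),
      (Algebra.IsIntegral.isIntegral t).fg_adjoin_singleton, fun e => ?_⟩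
    rw [smul_eq_mul, mul_comm, ← Algebra.smul_def, smul_pow]
    exact Submodule.smul_mem_smul (pow_mem_frobeniusPower hj e)
      (pow_mem (Algebra.self_mem_adjoin_singleton _ _) _)

variable {K : Type*} [Field K] [Algebra A K] [IsFractionRing A K]

theorem exists_ne_zero_smul_map_eq_algebraMap [IsDomain A] {M : Submodule A T} (hM : M.FG)
    (f : T →ₗ[A] K) :
    ∃ c : A, c ≠ 0 ∧ ∀ (I : Ideal A), ∀ x ∈ I • M, ∃ z ∈ I, algebraMap A K z = c • f x := by
  obtain ⟨c, hc, hcM⟩ := FractionalIdeal.isFractional_of_fg (S := nonZeroDivisors A) (hM.map f)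
  refine ⟨c, nonZeroDivisors.ne_zero hc, fun I x hx => ?_⟩
  refine Submodule.smul_induction_on hx (fun r hr m hm => ?_) ?_
  · obtain ⟨z, hz⟩ := hcM (f m) ⟨m, hm, rfl⟩
    exact ⟨r * z, Ideal.mul_mem_right _ _ hr,
      by rw [map_mul, hz, map_smul, smul_comm, Algebra.smul_def r]⟩
  · rintro x y ⟨z, hz, hzx⟩ ⟨z', hz', hzy⟩
    exact ⟨z + z', add_mem hz hz', by rw [map_add, hzx, hzy, map_add, smul_add]⟩

theorem IsFrobeniusLocallyProjective.exists_mem_algebraMap_eq [IsDomain A] [IsNoetherianRing A]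
    [IsLocalRing A] [Fact p.Prime] [CharP A p] [CharP T p] [Algebra.IsIntegral A T]
    (hA : IsFrobeniusLocallyProjective p A) (f : T →ₗ[A] K) {J : Ideal A} {v : T}
    (hv : v ∈ J.map (algebraMap A T)) (hf : ∀ e, f (v ^ p ^ e) = f v ^ p ^ e) :
    ∃ a ∈ J, algebraMap A K a = f v := by
  obtain ⟨M, hM, hvM⟩ := exists_fg_forall_pow_mem_frobeniusPower_smul (p := p) hv
  obtain ⟨c, hc, hcf⟩ := exists_ne_zero_smul_map_eq_algebraMap hM f
  obtain ⟨a, b, hb, hab⟩ := IsFractionRing.div_surjective (A := A) (f v)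
  have hbK : algebraMap A K b ≠ 0 := IsFractionRing.to_map_ne_zero_of_mem_nonZeroDivisors hb
  -- `f v = a / b`, and tight closure is trivial, so it suffices to bound `a` by `b J`.
  have hbJ : a ∈ Ideal.span {b} * J := by
    refine hA.mem_of_forall_mul_pow_mem hc fun e => ?_
    obtain ⟨z, hz, hze⟩ := hcf _ _ (hvM e)
    have hca : c * a ^ p ^ e = b ^ p ^ e * z := by
      apply IsFractionRing.injective A K
      rw [map_mul, map_mul, hze, hf, ← hab, Algebra.smul_def, map_pow, map_pow, div_pow]
      field_simp
    rw [hca, frobeniusPower_span_singleton_mul]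
    exact Ideal.mul_mem_mul (Ideal.mem_span_singleton_self _) hz
  obtain ⟨j, hj, hja⟩ := Ideal.mem_span_singleton_mul.1 hbJ
  exact ⟨j, hj, by rw [← hab, ← hja, map_mul]; field_simp⟩

end IntegralExtension

/-! ### Lang's theorem -/

theorem exists_eq_sum_range_smul {R V : Type*} [Ring R] [AddCommGroup V] [Module R V]
    [IsNoetherian R V] (f : ℕ → V) :
    ∃ (n : ℕ) (α : ℕ → R), f n = ∑ i ∈ Finset.range n, α i • f i := by
  let F : ℕ →o Submodule R V :=
    ⟨fun n => Submodule.span R (f '' Finset.range n), fun a b h =>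
      Submodule.span_mono (Set.image_mono (by simpa using h))⟩
  obtain ⟨n, hn⟩ := monotone_stabilizes_iff_noetherian.2 ‹IsNoetherian R V› F
  have hfn : f n ∈ F n := by
    rw [hn (n + 1) n.le_succ]
    exact Submodule.subset_span ⟨n, by simp, rfl⟩
  obtain ⟨α, hα⟩ := (Submodule.mem_span_image_finset_iff_exists_fun' R).1 hfn
  exact ⟨n, α, hα.symm⟩

section Lang

variable {p : ℕ} [Fact p.Prime] {Ω : Type*} [Field Ω] [IsAlgClosed Ω]

open Polynomial in
theorem exists_pow_eq_sum_mul_pow_sub_one (n : ℕ) (α : ℕ → Ω) :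
    ∃ y : Ω, y ^ p ^ n = (∑ j ∈ Finset.range n, (α j * y) ^ p ^ j) - 1 := by
  have hp := (Fact.out : p.Prime)
  let q : Polynomial Ω := 1 - ∑ j ∈ Finset.range n, C (α j ^ p ^ j) * X ^ p ^ j
  have hq : q.degree < ((p ^ n : ℕ) : WithBot ℕ) := by
    refine (degree_sub_le _ _).trans_lt (max_lt ?_ ?_)
    · exact degree_one_le.trans_lt (mod_cast pow_pos hp.pos n)
    · refine (degree_sum_le _ _).trans_lt ((Finset.sup_lt_iff (WithBot.bot_lt_coe _)).2 ?_)
      intro j hj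
      refine (degree_C_mul_X_pow_le _ _).trans_lt ?_
      exact_mod_cast Nat.pow_lt_pow_right hp.one_lt (Finset.mem_range.1 hj)
  have hdeg : (X ^ p ^ n + q).degree ≠ 0 := by
    rw [degree_add_eq_left_of_degree_lt (by rwa [degree_X_pow]), degree_X_pow]
    exact_mod_cast (pow_pos hp.pos n).ne'
  obtain ⟨y, hy⟩ := IsAlgClosed.exists_root _ hdeg
  refine ⟨y, ?_⟩
  simp only [IsRoot, q, eval_add, eval_sub, eval_pow, eval_X, eval_one, eval_finsetSum, eval_mul,
    eval_C] at hy
  simp only [mul_pow]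
  linear_combination hy

variable [CharP Ω p]

theorem exists_frobenius_recurrence (n : ℕ) (α : ℕ → Ω) :
    ∃ z : ℕ → Ω, z 0 = -1 ∧ ∀ i, z (i + 1) ^ p = z i + α i * z n := by
  obtain ⟨y, hy⟩ := exists_pow_eq_sum_mul_pow_sub_one (p := p) n α
  let z : ℕ → Ω := Nat.rec (-1) fun i zi => (frobeniusEquiv Ω p).symm (zi + α i * y)
  have hz (i : ℕ) : z (i + 1) ^ p = z i + α i * y := frobeniusEquiv_symm_pow_p Ω p _
  have hpow (i : ℕ) : z i ^ p ^ i = (∑ j ∈ Finset.range i, (α j * y) ^ p ^ j) - 1 := by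
    induction i with
    | zero => simp [z]
    | succ i ih =>
      rw [pow_succ' p i, pow_mul, hz, add_pow_char_pow, ih, Finset.sum_range_succ]
      ring
  have hzn : z n = y := iterateFrobenius_inj Ω p n ((hpow n).trans hy.symm)
  exact ⟨z, rfl, fun i => by rw [hz, hzn]⟩

variable {V : Type*} [AddCommGroup V] [Module Ω V] [FiniteDimensional Ω V] {ψ : V →+ V}

theorem IsCartierLinear.surjective_sub_id (hψ : IsCartierLinear p Ω ψ) :
    Function.Surjective fun v => ψ v - v := by
  intro b
  obtain ⟨n, α, hα⟩ := exists_eq_sum_range_smul (R := Ω) fun i => ψ^[i] b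
  obtain ⟨z, hz0, hz⟩ := exists_frobenius_recurrence (p := p) n α
  let v : V := ∑ i ∈ Finset.range n, z (i + 1) ^ p • ψ^[i] b
  have hv : v = ∑ i ∈ Finset.range (n + 1), z i • ψ^[i] b := by
    rw [Finset.sum_range_succ, hα, Finset.smul_sum, ← Finset.sum_add_distrib]
    refine Finset.sum_congr rfl fun i _ => ?_
    rw [hz, add_smul, smul_smul, mul_comm (z n)]
  have hψv : ψ v = ∑ i ∈ Finset.range n, z (i + 1) • ψ^[i + 1] b := by
    rw [map_sum]
    exact Finset.sum_congr rfl fun i _ => by rw [hψ, Function.iterate_succ_apply']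
  refine ⟨v, ?_⟩
  simp only
  rw [hψv, hv, Finset.sum_range_succ', hz0, Function.iterate_zero_apply]
  module

theorem IsCartierLinear.exists_fixed_sub_mem (hψ : IsCartierLinear p Ω ψ) {Z : Submodule Ω V}
    (hZ : ∀ z ∈ Z, ψ z ∈ Z) {t₀ : V} (ht₀ : ψ t₀ - t₀ ∈ Z) : ∃ t, ψ t = t ∧ t - t₀ ∈ Z := by
  let ψZ : Z →+ Z := (ψ.comp Z.subtype.toAddMonoidHom).codRestrict Z fun z => hZ z z.2
  have hψZ : IsCartierLinear p Ω ψZ := fun a z => Subtype.ext (hψ a z)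
  obtain ⟨z, hz⟩ := hψZ.surjective_sub_id ⟨ψ t₀ - t₀, ht₀⟩
  have hz' : ψ z - z = ψ t₀ - t₀ := congrArg Subtype.val hz
  refine ⟨t₀ - z, ?_, by simp⟩
  rw [map_sub, sub_eq_sub_iff_sub_eq_sub, ← hz']

open Matrix

variable {ι : Type*} [Fintype ι]

/-- The `p⁻¹`-linear endomorphism of `Ω ^ ι` sending `t` to the coordinatewise `p`-th root of
`c *ᵥ t`; its fixed points are the solutions of `t ^ p = c *ᵥ t`. -/
noncomputable def frobeniusRootMulVec (p : ℕ) [Fact p.Prime] [CharP Ω p] (c : Matrix ι ι Ω) :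
    (ι → Ω) →+ (ι → Ω) :=
  ((frobeniusEquiv Ω p).symm.toRingHom.toAddMonoidHom.compLeft ι).comp c.mulVecLin.toAddMonoidHom

theorem frobenius_comp_frobeniusRootMulVec (c : Matrix ι ι Ω) (t : ι → Ω) :
    frobenius Ω p ∘ frobeniusRootMulVec p c t = c *ᵥ t :=
  funext fun _ => frobeniusEquiv_symm_pow_p Ω p _

theorem isCartierLinear_frobeniusRootMulVec (c : Matrix ι ι Ω) :
    IsCartierLinear p Ω (frobeniusRootMulVec p c) := by
  intro a t
  refine (frobenius_inj Ω p).comp_left ?_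
  funext j
  have hj := congrFun (frobenius_comp_frobeniusRootMulVec (p := p) c t) j
  have hj' := congrFun (frobenius_comp_frobeniusRootMulVec (p := p) c (a ^ p • t)) j
  simp only [Function.comp_apply] at hj hj' ⊢
  rw [hj', Pi.smul_apply, smul_eq_mul, map_mul, hj, mulVec_smul, Pi.smul_apply, smul_eq_mul,
    frobenius_def]

theorem exists_mulVec_eq_and_pow_eq_mulVec {X : Type*} {φ : X → X} {G : Matrix X ι Ω}
    {c : Matrix ι ι Ω} (hG : G.submatrix φ id = G.map (frobenius Ω p) * c) {v : X → Ω}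
    (hv : v ∘ φ = frobenius Ω p ∘ v) {t₀ : ι → Ω} (ht₀ : G *ᵥ t₀ = v) :
    ∃ t, G *ᵥ t = v ∧ t ^ p = c *ᵥ t := by
  set Ψ := frobeniusRootMulVec p c
  have hΨ (t : ι → Ω) : frobenius Ω p ∘ (G *ᵥ Ψ t) = (G *ᵥ t) ∘ φ :=
    calc frobenius Ω p ∘ (G *ᵥ Ψ t)
      _ = G.map (frobenius Ω p) *ᵥ (frobenius Ω p ∘ Ψ t) := funext (RingHom.map_mulVec _ _ _)
      _ = (G *ᵥ t) ∘ φ := by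
        rw [frobenius_comp_frobeniusRootMulVec, mulVec_mulVec, ← hG]; rfl
  have hinj : Function.Injective fun u : X → Ω => frobenius Ω p ∘ u :=
    (frobenius_inj Ω p).comp_left
  obtain ⟨t, hfix, ht⟩ := (isCartierLinear_frobeniusRootMulVec c).exists_fixed_sub_mem
    (Z := LinearMap.ker G.mulVecLin) (t₀ := t₀)
    (fun z hz => hinj (by
      rw [LinearMap.mem_ker, mulVecLin_apply] at hz
      simp only [mulVecLin_apply, Ψ, hΨ, hz]
      ext; simp))
    (by
      rw [LinearMap.sub_mem_ker_iff]
      exact hinj (by simp only [mulVecLin_apply, Ψ, hΨ, ht₀, hv]))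
  rw [LinearMap.sub_mem_ker_iff, mulVecLin_apply, mulVecLin_apply, ht₀] at ht
  refine ⟨t, ht, ?_⟩
  rw [← frobenius_comp_frobeniusRootMulVec (p := p) c t, hfix]
  rfl

end Lang

open Matrix in
theorem isIntegral_of_pow_eq_mulVec {A Ω ι : Type*} [CommRing A] [Field Ω] [Algebra A Ω]
    [Fintype ι] {p : ℕ} (hp : 2 ≤ p) {c : Matrix ι ι A} {t : ι → Ω}
    (h : t ^ p = c.map (algebraMap A Ω) *ᵥ t) (j : ι) : IsIntegral A (t j) := by
  by_contra hj
  have : IsIntegrallyClosedIn (integralClosure A Ω).toSubring Ω :=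
    inferInstanceAs (IsIntegrallyClosedIn (integralClosure A Ω) Ω)
  obtain ⟨V, hV, hjV⟩ := Subring.exists_le_valuationSubring_of_isIntegrallyClosedIn
    (R := (integralClosure A Ω).toSubring) (x := t j) hj
  obtain ⟨i, -, hmax⟩ := Finset.exists_max_image Finset.univ (fun i => V.valuation (t i))
    ⟨j, Finset.mem_univ j⟩
  have hone_lt : 1 < V.valuation (t i) := by
    refine lt_of_lt_of_le ?_ (hmax j (Finset.mem_univ j))
    rwa [← not_le, V.valuation_le_one_iff]
  have hpow_le : V.valuation (t i) ^ p ≤ V.valuation (t i) := by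
    rw [← map_pow, ← Pi.pow_apply, h]
    refine Valuation.map_sum_le _ fun k _ => ?_
    have hc : V.valuation (algebraMap A Ω (c i k)) ≤ 1 :=
      (V.valuation_le_one_iff _).2 (hV (algebraMap_mem (integralClosure A Ω) _))
    rw [map_mul]
    exact (mul_le_of_le_one_left' hc).trans (hmax k (Finset.mem_univ k))
  exact hpow_le.not_gt (lt_self_pow₀ hone_lt hp)

/-! ### Trace functionals -/

section Trace

variable {p : ℕ} {K : Type*} [Field K]

theorem trace_pow_expChar_pow {L : Type*} [Field L] [Algebra K L] [FiniteDimensional K L]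
    [Algebra.IsSeparable K L] [ExpChar K p] (x : L) (e : ℕ) :
    Algebra.trace K L (x ^ p ^ e) = Algebra.trace K L x ^ p ^ e := by
  have : ExpChar (AlgebraicClosure K) p :=
    expChar_of_injective_algebraMap (algebraMap K _).injective p
  apply (algebraMap K (AlgebraicClosure K)).injective
  rw [map_pow (algebraMap K _), trace_eq_sum_embeddings, trace_eq_sum_embeddings, sum_pow_char_pow]
  exact Finset.sum_congr rfl fun σ _ => map_pow σ _ _

open IntermediateField in
theorem exists_frobeniusEquivariant_functional {Ω : Type*} [Field Ω] [Algebra K Ω]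
    [ExpChar K p] {w : Ω} (hw : IsSeparable K w) :
    ∃ f : Ω →ₗ[K] K, (∀ v ∈ K⟮w⟯, ∀ e, f (v ^ p ^ e) = f v ^ p ^ e) ∧
      ∃ (n : ℕ) (b : Fin n → Ω), ∀ v ∈ K⟮w⟯, ∑ i : Fin n, f (w ^ (i : ℕ) * v) • b i = v := by
  have : Algebra.IsSeparable K K⟮w⟯ := (isSeparable_adjoin_simple_iff_isSeparable K Ω).2 hw
  have : FiniteDimensional K K⟮w⟯ := adjoin.finiteDimensional hw.isIntegral
  obtain ⟨f, hf⟩ := LinearMap.exists_extend (p := K⟮w⟯.toSubalgebra.toSubmodule)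
    (Algebra.trace K K⟮w⟯)
  have hf' (x : K⟮w⟯) : f x = Algebra.trace K K⟮w⟯ x := LinearMap.congr_fun hf x
  let pb := adjoin.powerBasis hw.isIntegral
  let D := (Algebra.traceForm K K⟮w⟯).dualBasis (traceForm_nondegenerate K K⟮w⟯) pb.basis
  refine ⟨f, fun v hv e => ?_, pb.dim, fun i => (D i : Ω), fun v hv => ?_⟩
  · lift v to K⟮w⟯ using hv
    rw [← SubmonoidClass.coe_pow, hf', hf', trace_pow_expChar_pow]
  · lift v to K⟮w⟯ using hv
    conv_rhs => rw [← D.sum_repr v, coe_sum]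
    refine Finset.sum_congr rfl fun i _ => ?_
    have hrepr : D.repr v i = f (w ^ (i : ℕ) * v) := by
      rw [LinearMap.BilinForm.dualBasis_repr_apply, Algebra.traceForm_apply, ← hf', mul_comm,
        pb.basis_eq_pow]
      rfl
    rw [hrepr, coe_smul]

end Trace

/-! ### Cartier-stable families of functionals -/

section Functionals

variable {p : ℕ} {A S : Type*} [CommRing A] [CommRing S] [Algebra A S]

/-- The functional `r ↦ θ (g (r ^ p))`: the action of a `p⁻¹`-linear `θ : A → A` on `S → A`. -/
def cartierTwist [ExpChar S p] {θ : A →+ A} (hθ : IsCartierLinear p A θ) (g : S →ₗ[A] A) :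
    S →ₗ[A] A where
  toFun r := θ (g (r ^ p))
  map_add' x y := by rw [add_pow_expChar, map_add, map_add]
  map_smul' a x := by rw [smul_pow, map_smul, hθ, RingHom.id_apply]

@[simp]
theorem cartierTwist_apply [ExpChar S p] {θ : A →+ A} (hθ : IsCartierLinear p A θ)
    (g : S →ₗ[A] A) (r : S) : cartierTwist hθ g r = θ (g (r ^ p)) :=
  rfl

theorem exists_map_pow_eq_sum_pow_mul [ExpChar A p] [ExpChar S p] [Module.Finite A S]
    (hA : IsFrobeniusLocallyProjective p A) {ι : Type*} [Fintype ι] {g : ι → S →ₗ[A] A}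
    {h : S →ₗ[A] A} (hgh : ∀ {θ : A →+ A} (hθ : IsCartierLinear p A θ),
      cartierTwist hθ h ∈ Submodule.span A (Set.range g)) :
    ∃ c : ι → A, ∀ r, h (r ^ p) = ∑ j, g j r ^ p * c j := by
  obtain ⟨l, s, hs⟩ := Module.Finite.exists_fin (R := A) (M := S)
  -- Local projectivity solves for `c` on the generators `s`; both sides are Frobenius-linear.
  have hspan : (fun k => h (s k ^ p)) ∈
      Submodule.span A (Set.range fun (j : ι) (k : Fin l) => g j (s k) ^ p) := by
    refine Submodule.span_le.2 ?_ (hA l fun k => h (s k ^ p))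
    rintro _ ⟨θ, hθ, rfl⟩
    obtain ⟨d, hd⟩ := (Submodule.mem_span_range_iff_exists_fun A).1 (hgh hθ)
    refine (Submodule.mem_span_range_iff_exists_fun A).2 ⟨fun j => d j ^ p, funext fun k => ?_⟩
    have hk : ∑ j, d j * g j (s k) = θ (h (s k ^ p)) := by
      simpa using LinearMap.congr_fun hd (s k)
    rw [← hk, ← frobenius_def, map_sum]
    simp [frobenius_def, mul_pow]
  obtain ⟨c, hc⟩ := (Submodule.mem_span_range_iff_exists_fun A).1 hspan
  refine ⟨c, fun r => ?_⟩
  have hext : h ∘ₛₗ LinearMap.frobenius A S p = ∑ j, c j • (LinearMap.frobenius A A p ∘ₛₗ g j) := by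
    refine LinearMap.ext_on_range hs fun k => ?_
    simpa [LinearMap.frobenius_def, frobenius_def] using (congrFun hc k).symm
  simpa [LinearMap.frobenius_def, frobenius_def, mul_comm] using LinearMap.congr_fun hext r

/-- The functionals `g : S → A` which map every `w ^ p ^ e` into `I^[p ^ e]`. They are stable
under `cartierTwist`, and they include the trace functionals when `w` is in the closure of `I`. -/
noncomputable def frobeniusFunctionals (p : ℕ) [ExpChar A p] (I : Ideal A) (w : S) :
    Submodule A (S →ₗ[A] A) :=
  ⨅ e, Submodule.comap (LinearMap.applyₗ (w ^ p ^ e)) (frobeniusPower p I e)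

theorem mem_frobeniusFunctionals [ExpChar A p] {I : Ideal A} {w : S} {g : S →ₗ[A] A} :
    g ∈ frobeniusFunctionals p I w ↔ ∀ e, g (w ^ p ^ e) ∈ frobeniusPower p I e := by
  simp [frobeniusFunctionals]

theorem cartierTwist_mem_frobeniusFunctionals [ExpChar A p] [ExpChar S p] {I : Ideal A} {w : S}
    {θ : A →+ A} (hθ : IsCartierLinear p A θ) {g : S →ₗ[A] A}
    (hg : g ∈ frobeniusFunctionals p I w) : cartierTwist hθ g ∈ frobeniusFunctionals p I w := by
  rw [mem_frobeniusFunctionals] at hg ⊢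
  intro e
  rw [cartierTwist_apply, ← pow_mul, ← pow_succ]
  exact hθ.map_mem_frobeniusPower (hg (e + 1))

theorem exists_sum_smul_eq_of_forall_mem_span {ι κ Ω : Type*} [Fintype ι] [Fintype κ]
    [AddCommGroup Ω] [Module A Ω] {g : ι → S →ₗ[A] A} {τ : κ → S →ₗ[A] A}
    (hτ : ∀ i, τ i ∈ Submodule.span A (Set.range g)) (b : κ → Ω) :
    ∃ t : ι → Ω, ∀ r, ∑ j, g j r • t j = ∑ i, τ i r • b i := by
  choose d hd using fun i => (Submodule.mem_span_range_iff_exists_fun A).1 (hτ i)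
  refine ⟨fun j => ∑ i, d i j • b i, fun r => ?_⟩
  simp only [← hd, LinearMap.sum_apply, LinearMap.smul_apply, Finset.sum_smul, Finset.smul_sum,
    smul_smul, smul_eq_mul]
  rw [Finset.sum_comm]
  simp only [mul_comm]

end Functionals

/-! ### Closedness of extended ideals in the integral closure -/

section FrobeniusPowerMap

variable {p : ℕ} {A T : Type*} [CommRing A] [CommRing T] [Algebra A T] [ExpChar A p] [ExpChar T p]

theorem map_frobeniusPower_algebraMap (J : Ideal A) (e : ℕ) :
    (frobeniusPower p J e).map (algebraMap A T) = frobeniusPower p (J.map (algebraMap A T)) e := by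
  simp only [frobeniusPower, Ideal.map_map]
  congr 1
  ext a
  simp [iterateFrobenius_def]

theorem pow_mem_map_frobeniusPower {J : Ideal A} {v : T} (hv : v ∈ J.map (algebraMap A T))
    (e : ℕ) : v ^ p ^ e ∈ (frobeniusPower p J e).map (algebraMap A T) := by
  rw [map_frobeniusPower_algebraMap]
  exact pow_mem_frobeniusPower hv e

theorem mem_map_of_pow_mem_map_frobeniusPower [PerfectRing T p] {J : Ideal A} {v : T}
    {e : ℕ} (hv : v ^ p ^ e ∈ (frobeniusPower p J e).map (algebraMap A T)) :
    v ∈ J.map (algebraMap A T) := by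
  rw [map_frobeniusPower_algebraMap, frobeniusPower, Ideal.mem_map_iff_of_surjective _
    (bijective_iterateFrobenius T p e).surjective] at hv
  obtain ⟨u, hu, huv⟩ := hv
  rwa [← (bijective_iterateFrobenius T p e).injective huv]

theorem pow_mem_map_frobeniusPower_sup {I J : Ideal A} {v : T}
    (hv : v ∈ (I ⊔ J).map (algebraMap A T)) (e : ℕ) :
    v ^ p ^ e ∈ (frobeniusPower p I e ⊔ J).map (algebraMap A T) := by
  refine Ideal.map_mono ?_ (pow_mem_map_frobeniusPower (p := p) hv e)
  rw [frobeniusPower_sup]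
  exact sup_le_sup_left ((frobeniusPower_le_pow J e).trans
    (Ideal.pow_le_self (expChar_pow_pos A p e).ne')) _

end FrobeniusPowerMap

open IntermediateField in
theorem algebraMap_mem_adjoin_simple_of_mem_adjoin {A K T Ω : Type*} [CommRing A] [Field K]
    [Algebra A K] [CommRing T] [Algebra A T] [Field Ω] [Algebra A Ω] [Algebra K Ω]
    [IsScalarTower A K Ω] [Algebra T Ω] [IsScalarTower A T Ω] {w s : T}
    (hs : s ∈ Algebra.adjoin A {w}) : algebraMap T Ω s ∈ K⟮algebraMap T Ω w⟯ := by
  have hle : Algebra.adjoin A {w} ≤ (K⟮algebraMap T Ω w⟯.toSubalgebra.restrictScalars A).comap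
      (IsScalarTower.toAlgHom A T Ω) :=
    Algebra.adjoin_le (Set.singleton_subset_iff.2 (mem_adjoin_simple_self K _))
  exact hle hs

theorem perfectRing_of_isIntegralClosure (p : ℕ) [Fact p.Prime] (A Ω : Type*) {T : Type*}
    [CommRing A] [CommRing T] [CharP T p] [Algebra A T] [Field Ω] [IsAlgClosed Ω] [Algebra A Ω]
    [Algebra T Ω] [IsScalarTower A T Ω] [IsIntegralClosure T A Ω] : PerfectRing T p := by
  have hTΩ := IsIntegralClosure.algebraMap_injective T A Ω
  have : IsReduced T := isReduced_of_injective _ hTΩ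
  refine PerfectRing.ofSurjective T p fun x => ?_
  have hp := (Fact.out : p.Prime).pos
  obtain ⟨y, hy⟩ := IsAlgClosed.exists_pow_nat_eq (algebraMap T Ω x) hp
  have hint : IsIntegral A y :=
    IsIntegral.of_pow hp (hy ▸ (IsIntegralClosure.isIntegral A Ω x).algebraMap)
  refine ⟨IsIntegralClosure.mk' T y hint, hTΩ ?_⟩
  rw [frobenius_def, map_pow, IsIntegralClosure.algebraMap_mk', hy]

section IntegralClosure

variable {p : ℕ} [Fact p.Prime] {A K T Ω : Type*} [CommRing A] [CharP A p] [CommRing T]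
  [Algebra A T]

open Matrix in
theorem IsFrobeniusLocallyProjective.exists_sum_smul_eq (hA : IsFrobeniusLocallyProjective p A)
    [Field Ω] [IsAlgClosed Ω] [CharP Ω p] [Algebra A Ω] [Algebra T Ω] [IsScalarTower A T Ω]
    [IsIntegralClosure T A Ω] {S : Subalgebra A T} [Module.Finite A S] [CharP S p]
    {ι : Type*} [Fintype ι] {g : ι → S →ₗ[A] A}
    (hg : ∀ i {θ : A →+ A} (hθ : IsCartierLinear p A θ),
      cartierTwist hθ (g i) ∈ Submodule.span A (Set.range g))
    {t₀ : ι → Ω} (ht₀ : ∀ r : S, ∑ j, g j r • t₀ j = algebraMap T Ω r) :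
    ∃ t : ι → T, ∀ r : S, ∑ j, g j r • t j = (r : T) := by
  choose c hc using fun i => exists_map_pow_eq_sum_pow_mul hA (hg i)
  let G : Matrix S ι Ω := of fun r j => algebraMap A Ω (g j r)
  let C : Matrix ι ι A := of fun j i => c i j
  have hG : G.submatrix (· ^ p) id = G.map (frobenius Ω p) * C.map (algebraMap A Ω) := by
    ext r i
    simp [G, C, hc, Matrix.mul_apply, frobenius_def]
  obtain ⟨t, hGt, ht⟩ := exists_mulVec_eq_and_pow_eq_mulVec hG (v := fun r => algebraMap T Ω r)
    (t₀ := t₀) (by ext r; simp [frobenius_def])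
    (by ext r; simp [G, mulVec, dotProduct, ← ht₀, Algebra.smul_def])
  have hint (j : ι) : IsIntegral A (t j) :=
    isIntegral_of_pow_eq_mulVec (Fact.out : p.Prime).two_le ht j
  refine ⟨fun j => IsIntegralClosure.mk' T (t j) (hint j), fun r => ?_⟩
  apply IsIntegralClosure.algebraMap_injective T A Ω
  rw [← congrFun hGt r]
  simp [G, mulVec, dotProduct, Algebra.smul_def, IsIntegralClosure.algebraMap_mk',
    ← IsScalarTower.algebraMap_apply]

variable [IsDomain A] [IsNoetherianRing A] [IsLocalRing A] [Field K] [Algebra A K]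
  [IsFractionRing A K]

theorem IsFrobeniusLocallyProjective.exists_functional_forall_mem_frobeniusFunctionals
    [CharP T p] [Algebra.IsIntegral A T] (hA : IsFrobeniusLocallyProjective p A) {I : Ideal A}
    {S : Subalgebra A T} {w : S}
    (hw : ∀ N, (w : T) ∈ (I ⊔ maximalIdeal A ^ N).map (algebraMap A T)) (f : T →ₗ[A] K)
    (hf : ∀ s ∈ S, ∀ e, f (s ^ p ^ e) = f s ^ p ^ e) :
    ∃ τ : S →ₗ[A] A, (∀ s, algebraMap A K (τ s) = f s) ∧
      ∀ s, τ ∘ₗ LinearMap.mulLeft A s ∈ frobeniusFunctionals p I w := by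
  have hrange (s : S) : (f ∘ₗ S.val.toLinearMap) s ∈ LinearMap.range (Algebra.linearMap A K) := by
    obtain ⟨a, -, ha⟩ := hA.exists_mem_algebraMap_eq f (J := ⊤) (v := s)
      (by simp [Ideal.map_top]) (hf s s.2)
    exact ⟨a, ha⟩
  have hinj : Function.Injective (Algebra.linearMap A K) := IsFractionRing.injective A K
  let τ := (f ∘ₗ S.val.toLinearMap).codRestrictOfInjective (Algebra.linearMap A K) hinj hrange
  have hτ (s : S) : algebraMap A K (τ s) = f s :=
    LinearMap.codRestrictOfInjective_comp_apply _ _ hinj hrange s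
  refine ⟨τ, hτ, fun s => mem_frobeniusFunctionals.2 fun e => ?_⟩
  refine mem_of_forall_mem_sup_maximalIdeal_pow_smul_top fun N => ?_
  obtain ⟨a, ha, hfa⟩ := hA.exists_mem_algebraMap_eq f
    (Ideal.mul_mem_left _ (s : T) (pow_mem_map_frobeniusPower_sup (p := p) (hw N) e))
    (hf _ (s * w ^ p ^ e).2)
  have hτa : τ (s * w ^ p ^ e) = a := hinj ((hτ _).trans hfa.symm)
  rwa [LinearMap.comp_apply, LinearMap.mulLeft_apply, hτa, smul_eq_mul, Ideal.mul_top]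

variable [Field Ω] [IsAlgClosed Ω] [Algebra A Ω] [Algebra T Ω] [IsScalarTower A T Ω]
  [IsIntegralClosure T A Ω] [Algebra K Ω] [IsScalarTower A K Ω]

theorem IsFrobeniusLocallyProjective.mem_map_of_isSeparable [CharP T p] [CharP Ω p] [CharP K p]
    (hA : IsFrobeniusLocallyProjective p A) {I : Ideal A} {w : T}
    (hsep : IsSeparable K (algebraMap T Ω w))
    (hw : ∀ N, w ∈ (I ⊔ maximalIdeal A ^ N).map (algebraMap A T)) :
    w ∈ I.map (algebraMap A T) := by
  have : Algebra.IsIntegral A T := IsIntegralClosure.isIntegral_algebra A Ω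
  let S := Algebra.adjoin A {w}
  have : Module.Finite A S :=
    Module.Finite.iff_fg.2 (Algebra.IsIntegral.isIntegral w).fg_adjoin_singleton
  have : CharP S p := (algebraMap S T).charP Subtype.val_injective p
  let wS : S := ⟨w, Algebra.self_mem_adjoin_singleton A w⟩
  obtain ⟨f, hf, n, b, hb⟩ := exists_frobeniusEquivariant_functional (p := p) hsep
  let fT : T →ₗ[A] K := f.restrictScalars A ∘ₗ (IsScalarTower.toAlgHom A T Ω).toLinearMap
  have hfT (s : T) : fT s = f (algebraMap T Ω s) := rfl
  obtain ⟨τ, hτ, hτw⟩ := hA.exists_functional_forall_mem_frobeniusFunctionals (w := wS) hw fT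
    fun s hs e => by
      rw [hfT, hfT, map_pow, hf _ (algebraMap_mem_adjoin_simple_of_mem_adjoin hs)]
  obtain ⟨m, g, hg⟩ := Submodule.fg_iff_exists_fin_generating_family.1
    (IsNoetherian.noetherian (frobeniusFunctionals p I wS))
  have hgw (j : Fin m) : g j ∈ frobeniusFunctionals p I wS := hg ▸ Submodule.subset_span ⟨j, rfl⟩
  obtain ⟨t₀, ht₀⟩ := exists_sum_smul_eq_of_forall_mem_span (g := g)
    (fun i : Fin n => hg.symm ▸ hτw (wS ^ (i : ℕ))) b
  obtain ⟨t, ht⟩ := hA.exists_sum_smul_eq (g := g) (t₀ := t₀)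
    (fun i _ hθ => hg.symm ▸ cartierTwist_mem_frobeniusFunctionals hθ (hgw i))
    (fun r => by
      rw [ht₀, ← hb _ (algebraMap_mem_adjoin_simple_of_mem_adjoin (K := K) r.2)]
      refine Finset.sum_congr rfl fun i _ => ?_
      rw [LinearMap.comp_apply, LinearMap.mulLeft_apply, ← algebraMap_smul K, hτ, hfT]
      simp [wS])
  rw [← show ∑ j, g j wS • t j = w from ht wS]
  refine sum_mem fun j _ => ?_
  have hgI : g j wS ∈ I := by
    simpa [frobeniusPower_zero] using mem_frobeniusFunctionals.1 (hgw j) 0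
  rw [Algebra.smul_def]
  exact Ideal.mul_mem_right _ _ (Ideal.mem_map_of_mem _ hgI)

variable (K Ω) in
theorem IsFrobeniusLocallyProjective.mem_map_of_forall_mem_map_sup [Algebra.IsAlgebraic K Ω]
    (hA : IsFrobeniusLocallyProjective p A) {I : Ideal A} {u : T}
    (hu : ∀ N, u ∈ (I ⊔ maximalIdeal A ^ N).map (algebraMap A T)) :
    u ∈ I.map (algebraMap A T) := by
  have hTΩ := IsIntegralClosure.algebraMap_injective T A Ω
  have : CharP K p := charP_of_injective_algebraMap (IsFractionRing.injective A K) p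
  have : CharP Ω p := charP_of_injective_algebraMap (algebraMap K Ω).injective p
  have : CharP T p := (algebraMap T Ω).charP hTΩ p
  have : PerfectRing T p := perfectRing_of_isIntegralClosure p A Ω
  obtain ⟨e, w, hw⟩ := (isPurelyInseparable_iff_pow_mem (separableClosure K Ω) p).1
    inferInstance (algebraMap T Ω u)
  have hsep : IsSeparable K (algebraMap T Ω (u ^ p ^ e)) := by
    rw [map_pow, ← hw]
    exact w.2
  exact mem_map_of_pow_mem_map_frobeniusPower
    (hA.mem_map_of_isSeparable hsep fun N => pow_mem_map_frobeniusPower_sup (hu N) e)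

end IntegralClosure

/-! ### Power series over a field of positive characteristic -/

theorem exists_dual_family {k V : Type*} [Field k] [AddCommGroup V] [Module k V] {s : Set V}
    (hs : s.Finite) : ∃ (n : ℕ) (b : Fin n → V) (l : Fin n → V →ₗ[k] k),
      ∀ c ∈ s, ∑ i, l i c • b i = c := by
  have : Module.Finite k (Submodule.span k s) := Module.Finite.iff_fg.2 (Submodule.fg_span hs)
  let B := Module.finBasis k (Submodule.span k s)
  choose l hl using fun i => LinearMap.exists_extend (B.coord i)
  refine ⟨_, fun i => B i, l, fun c hc => ?_⟩
  lift c to Submodule.span k s using Submodule.subset_span hc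
  conv_rhs => rw [← B.sum_repr c, Submodule.coe_sum]
  exact Finset.sum_congr rfl fun i _ =>
    congrArg (· • (B i : V)) (LinearMap.congr_fun (hl i) c)

theorem exists_ringHom_dual_family {k B : Type*} [Field k] [CommRing B] (φ : k →+* B) {s : Set B}
    (hs : s.Finite) : ∃ (n : ℕ) (b : Fin n → B) (l : Fin n → B →+ k),
      (∀ i a x, l i (φ a * x) = a * l i x) ∧ ∀ c ∈ s, ∑ i, φ (l i c) * b i = c := by
  let := φ.toAlgebra
  obtain ⟨n, b, l, hl⟩ := exists_dual_family (k := k) hs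
  exact ⟨n, b, fun i => (l i).toAddMonoidHom, fun i => (l i).map_smul,
    fun c hc => by simp only [Algebra.smul_def] at hl; exact hl c hc⟩

section SmallExponent

variable {σ : Type*} [Finite σ] {p : ℕ}

/-- The exponent vector, with all entries less than `p`, given by `ν : σ → Fin p`. -/
noncomputable def smallExponent (ν : σ → Fin p) : σ →₀ ℕ :=
  Finsupp.equivFunOnFinite.symm fun i => ν i

@[simp]
theorem smallExponent_apply (ν : σ → Fin p) (i : σ) : smallExponent ν i = ν i :=
  rfl

theorem smul_add_smallExponent_inj {μ μ' : σ →₀ ℕ} {ν ν' : σ → Fin p} :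
    p • μ + smallExponent ν = p • μ' + smallExponent ν' ↔ μ = μ' ∧ ν = ν' := by
  refine ⟨fun h => ?_, fun ⟨hμ, hν⟩ => by rw [hμ, hν]⟩
  have hi (i : σ) : p * μ i + ν i = p * μ' i + ν' i := by simpa using DFunLike.congr_fun h i
  constructor
  · ext i
    have hpos : 0 < p := (ν i).pos
    have hdiv := congrArg (· / p) (hi i)
    simpa [Nat.mul_add_div hpos, Nat.div_eq_of_lt (ν i).2, Nat.div_eq_of_lt (ν' i).2] using hdiv
  · funext i
    have hmod := congrArg (· % p) (hi i)
    simpa [Nat.mod_eq_of_lt, Fin.val_inj] using hmod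

theorem exists_eq_smul_add_smallExponent [NeZero p] (κ : σ →₀ ℕ) :
    ∃ (μ : σ →₀ ℕ) (ν : σ → Fin p), κ = p • μ + smallExponent ν := by
  refine ⟨κ.mapRange (· / p) (Nat.zero_div p),
    fun i => ⟨κ i % p, Nat.mod_lt _ (NeZero.pos p)⟩, ?_⟩
  ext i
  simp [Nat.div_add_mod]

end SmallExponent

section FrobeniusComponent

open MvPowerSeries

variable {σ : Type*} {k : Type*} [CommRing k] {p : ℕ}

/-- Writing `a = ∑ ν, X ^ ν * a_ν` with `ν` small and `a_ν` a series in the `p`-th powers of the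
variables, this is `a ↦ a_ν` followed by `l` on coefficients and `X i ^ p ↦ X i`. -/
noncomputable def frobeniusComponent [Finite σ] (l : k →+ k) (ν : σ → Fin p) :
    MvPowerSeries σ k →+ MvPowerSeries σ k where
  toFun a μ := l (coeff (p • μ + smallExponent ν) a)
  map_zero' := funext fun μ => by simp only [map_zero]; rfl
  map_add' a b := funext fun μ => by simp only [map_add]; rfl

theorem coeff_frobeniusComponent [Finite σ] (l : k →+ k) (ν : σ → Fin p) (a : MvPowerSeries σ k)
    (μ : σ →₀ ℕ) :
    coeff μ (frobeniusComponent l ν a) = l (coeff (p • μ + smallExponent ν) a) :=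
  rfl

variable [Fact p.Prime] [CharP k p]

theorem coeff_smul_pow_char (f : MvPowerSeries σ k) (x : σ →₀ ℕ) :
    coeff (p • x) (f ^ p) = coeff x f ^ p := by
  rw [← map_frobenius_expand p (Fact.out : p.Prime).ne_zero, coeff_map, coeff_expand_smul,
    frobenius_def]

theorem exists_eq_smul_of_coeff_pow_char_ne_zero {f : MvPowerSeries σ k} {x : σ →₀ ℕ}
    (h : coeff x (f ^ p) ≠ 0) : ∃ y, x = p • y := by
  rw [← map_frobenius_expand p (Fact.out : p.Prime).ne_zero, coeff_map] at h
  have hdvd (i : σ) : p ∣ x i := by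
    by_contra hi
    exact h (by rw [coeff_expand_of_not_dvd _ _ _ hi, map_zero])
  refine ⟨x.mapRange (· / p) (Nat.zero_div p), ?_⟩
  ext i
  simp [Nat.mul_div_cancel' (hdvd i)]

theorem coeff_pow_char_mul [Finite σ] [DecidableEq σ] (f b : MvPowerSeries σ k)
    (μ : σ →₀ ℕ) (ν : σ → Fin p) :
    coeff (p • μ + smallExponent ν) (f ^ p * b) =
      ∑ xy ∈ Finset.HasAntidiagonal.antidiagonal μ,
        coeff xy.1 f ^ p * coeff (p • xy.2 + smallExponent ν) b := by
  rw [coeff_mul]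
  symm
  refine Finset.sum_of_injOn (fun xy => (p • xy.1, p • xy.2 + smallExponent ν)) ?_ ?_ ?_ ?_
  · rintro ⟨x, y⟩ _ ⟨x', y'⟩ _ h
    rw [Prod.mk.injEq, smul_add_smallExponent_inj] at h
    exact Prod.ext (smul_right_injective _ (Fact.out : p.Prime).ne_zero h.1) h.2.1
  · rintro ⟨x, y⟩ h
    simp only [Finset.mem_coe, Finset.HasAntidiagonal.mem_antidiagonal] at h ⊢
    rw [← h, smul_add, add_assoc]
  · rintro ⟨x, y⟩ h hxy
    rw [Finset.HasAntidiagonal.mem_antidiagonal] at h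
    by_contra hne
    obtain ⟨x, rfl⟩ := exists_eq_smul_of_coeff_pow_char_ne_zero (left_ne_zero_of_mul hne)
    obtain ⟨y, ν', rfl⟩ := exists_eq_smul_add_smallExponent (p := p) y
    rw [← add_assoc, ← smul_add, smul_add_smallExponent_inj] at h
    exact hxy ⟨(x, y), by simpa using h.1, by rw [h.2]⟩
  · rintro ⟨x, y⟩ -
    simp only [coeff_smul_pow_char]

theorem coeff_pow_char_mul_monomial [Finite σ] (f : MvPowerSeries σ k) (μ : σ →₀ ℕ)
    (ν : σ → Fin p) (c : k) :
    coeff (p • μ + smallExponent ν) (f ^ p * monomial (smallExponent ν) c) = coeff μ f ^ p * c := by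
  rw [coeff_add_mul_monomial, coeff_smul_pow_char]

theorem coeff_pow_char_mul_monomial_of_ne [Finite σ] (f : MvPowerSeries σ k) (μ : σ →₀ ℕ)
    {ν ν' : σ → Fin p} (hν : ν ≠ ν') (c : k) :
    coeff (p • μ + smallExponent ν) (f ^ p * monomial (smallExponent ν') c) = 0 := by
  classical
  rw [coeff_mul_monomial]
  split_ifs with hle
  · by_contra hne
    obtain ⟨y, hy⟩ := exists_eq_smul_of_coeff_pow_char_ne_zero (left_ne_zero_of_mul hne)
    have hμ : p • μ + smallExponent ν = p • y + smallExponent ν' := by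
      rw [← hy, tsub_add_cancel_of_le hle]
    exact hν (smul_add_smallExponent_inj.1 hμ).2
  · rfl

theorem coeff_sum_monomial_mul_frobeniusComponent_pow [Fintype σ] [DecidableEq σ] {ι : Type*}
    [Fintype ι] (b : ι → k) (l : ι → k →+ k) (a : MvPowerSeries σ k) (μ : σ →₀ ℕ)
    (ν : σ → Fin p) :
    coeff (p • μ + smallExponent ν)
        (∑ i, ∑ ν' : σ → Fin p, monomial (smallExponent ν') (b i) *
          frobeniusComponent (l i) ν' a ^ p) =
      ∑ i, l i (coeff (p • μ + smallExponent ν) a) ^ p * b i := by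
  simp only [map_sum, mul_comm (monomial _ _)]
  refine Finset.sum_congr rfl fun i _ => ?_
  rw [Finset.sum_eq_single ν, coeff_pow_char_mul_monomial, coeff_frobeniusComponent]
  · exact fun ν' _ hne => coeff_pow_char_mul_monomial_of_ne _ _ hne.symm _
  · exact fun hν => absurd (Finset.mem_univ ν) hν

theorem isCartierLinear_frobeniusComponent [Finite σ] {l : k →+ k} (hl : IsCartierLinear p k l)
    (ν : σ → Fin p) : IsCartierLinear p (MvPowerSeries σ k) (frobeniusComponent l ν) := by
  classical
  intro a b
  ext μ
  rw [coeff_frobeniusComponent, smul_eq_mul, smul_eq_mul, coeff_pow_char_mul, map_sum, coeff_mul]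
  exact Finset.sum_congr rfl fun xy _ => hl _ _

end FrobeniusComponent

open MvPowerSeries in
theorem mem_span_range_X_pow_of_forall_coeff_eq_zero {σ k : Type*} [Finite σ] [CommRing k] {n : ℕ}
    {f : MvPowerSeries σ k} (h : ∀ x : σ →₀ ℕ, x.degree < n → coeff x f = 0) :
    f ∈ Ideal.span (Set.range (X : σ → MvPowerSeries σ k)) ^ n := by
  classical
  let E := (toAdicCompletionAlgEquiv σ k).toLinearEquiv
  have htrunc : truncTotal n f = 0 := by
    ext x
    by_cases hx : x.degree < n
    · rw [coeff_truncTotal _ hx, h x hx, MvPolynomial.coeff_zero]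
    · rw [coeff_truncTotal_eq_zero _ (not_lt.1 hx), MvPolynomial.coeff_zero]
  have hker : E f ∈
      (AdicCompletion.eval (MvPolynomial.idealOfVars σ k) (MvPolynomial σ k) n).ker := by
    rw [LinearMap.mem_ker]
    change (toAdicCompletion σ k f).val n = 0
    rw [toAdicCompletion_apply_eq_mk_truncTotal, htrunc]
    exact map_zero _
  rw [← AdicCompletion.pow_smul_top_eq_ker_eval (MvPolynomial.idealOfVars_fg _ _)] at hker
  have hf : f ∈ MvPolynomial.idealOfVars σ k ^ n •
      (⊤ : Submodule (MvPolynomial σ k) (MvPowerSeries σ k)) := by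
    have hmap := Submodule.mem_map_of_mem (f := E.symm.toLinearMap) hker
    rw [Submodule.map_smul'', Submodule.map_top, LinearEquiv.range] at hmap
    simpa only [LinearEquiv.coe_coe, LinearEquiv.symm_apply_apply] using hmap
  rw [Ideal.smul_top_eq_map, Submodule.restrictScalars_mem, Ideal.map_pow,
    MvPolynomial.idealOfVars, Ideal.map_span, ← Set.range_comp] at hf
  have hX : algebraMap (MvPolynomial σ k) (MvPowerSeries σ k) ∘ MvPolynomial.X = X :=
    funext fun i => MvPolynomial.coe_X i
  rwa [hX] at hf

open MvPowerSeries in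
theorem maximalIdeal_mvPowerSeries (σ k : Type*) [Finite σ] [Field k] :
    maximalIdeal (MvPowerSeries σ k) =
      Ideal.span (Set.range (X : σ → MvPowerSeries σ k)) := by
  have hmem (f : MvPowerSeries σ k) : f ∈ maximalIdeal _ ↔ constantCoeff f = 0 := by
    rw [mem_maximalIdeal, mem_nonunits_iff, isUnit_iff_constantCoeff, isUnit_iff_ne_zero, not_not]
  apply le_antisymm
  · intro f hf
    rw [← pow_one (Ideal.span _)]
    refine mem_span_range_X_pow_of_forall_coeff_eq_zero fun x hx => ?_
    rw [Nat.lt_one_iff, Finsupp.degree_eq_zero_iff] at hx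
    rw [hx]
    exact (hmem f).1 hf
  · rw [Ideal.span_le]
    rintro _ ⟨i, rfl⟩
    exact (hmem _).2 (constantCoeff_X i)

open MvPowerSeries in
theorem isFrobeniusLocallyProjective_mvPowerSeries (p : ℕ) [Fact p.Prime] (σ k : Type*) [Finite σ]
    [Field k] [CharP k p] : IsFrobeniusLocallyProjective p (MvPowerSeries σ k) := by
  intro l a
  refine mem_of_forall_mem_sup_maximalIdeal_pow_smul_top fun t => ?_
  cases nonempty_fintype σ
  classical
  let lowCoeffs : Set k := ⋃ j, (fun x => coeff x (a j)) '' {x : σ →₀ ℕ | x.degree < t}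
  have hfin : lowCoeffs.Finite :=
    Set.finite_iUnion fun j => (Finsupp.finite_of_degree_lt t).image _
  obtain ⟨n, b, L, hL, hrec⟩ := exists_ringHom_dual_family (frobenius k p) hfin
  let w : Fin l → MvPowerSeries σ k := ∑ i, ∑ ν : σ → Fin p,
    monomial (smallExponent ν) (b i) • fun j => frobeniusComponent (L i) ν (a j) ^ p
  have hw (j : Fin l) : (a - w) j ∈ maximalIdeal (MvPowerSeries σ k) ^ t := by
    rw [maximalIdeal_mvPowerSeries]
    refine mem_span_range_X_pow_of_forall_coeff_eq_zero fun x hx => ?_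
    obtain ⟨μ, ν, rfl⟩ := exists_eq_smul_add_smallExponent (p := p) x
    rw [Pi.sub_apply, map_sub, sub_eq_zero]
    simp only [w, Finset.sum_apply, Pi.smul_apply, smul_eq_mul]
    rw [coeff_sum_monomial_mul_frobeniusComponent_pow]
    exact (hrec _ (Set.mem_iUnion.2 ⟨j, _, hx, rfl⟩)).symm
  rw [← add_sub_cancel w a]
  refine Submodule.add_mem_sup ?_ ?_
  · exact Submodule.sum_mem _ fun i _ => Submodule.sum_mem _ fun ν _ => Submodule.smul_mem _ _
      (Submodule.subset_span ⟨_, isCartierLinear_frobeniusComponent (hL i) ν, by simp⟩)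
  · rw [pi_eq_sum_univ' (a - w)]
    exact Submodule.sum_mem _ fun j _ => Submodule.smul_mem_smul (hw j) Submodule.mem_top

/-! ### Coefficient fields -/

theorem cotangentComplex_mk_eq_zero_iff {R S : Type*} [CommRing R] [CommRing S] [Algebra R S]
    {ι : Type*} (P : Algebra.Generators R S ι) {x : P.Ring} (hx : x ∈ P.ker) :
    P.toExtension.cotangentComplex (.mk ⟨x, hx⟩) = 0 ↔
      ∀ i, MvPolynomial.aeval P.val (MvPolynomial.pderiv i x) = 0 := by
  rw [Algebra.Extension.cotangentComplex_mk, ← P.cotangentSpaceBasis.repr.map_eq_zero_iff,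
    DFunLike.ext_iff]
  refine forall_congr' fun i => ?_
  rw [← P.cotangentSpaceBasis_repr_one_tmul x i]
  rfl

theorem subsingleton_h1Cotangent_iff (R S : Type*) [CommRing R] [CommRing S] [Algebra R S] :
    Subsingleton (Algebra.H1Cotangent R S) ↔ ∀ x : MvPolynomial S R,
      MvPolynomial.aeval id x = (0 : S) →
      (∀ i, MvPolynomial.aeval id (MvPolynomial.pderiv i x) = (0 : S)) →
      x ∈ RingHom.ker (MvPolynomial.aeval (R := R) (id : S → S)) ^ 2 := by
  let P := Algebra.Generators.self R S
  have hker : P.toExtension.ker = RingHom.ker (MvPolynomial.aeval (R := R) (id : S → S)) :=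
    P.ker_eq_ker_aeval_val
  rw [← hker]
  constructor
  · intro hsub x hx hd
    have hxker : x ∈ P.toExtension.ker := hker ▸ hx
    have hzero : (⟨.mk ⟨x, hxker⟩, (cotangentComplex_mk_eq_zero_iff P hxker).2 hd⟩ :
      P.toExtension.H1Cotangent) = 0 := Subsingleton.elim (h := hsub) _ _
    exact (Algebra.Extension.Cotangent.mk_eq_zero_iff _).1 (congrArg Subtype.val hzero)
  · intro h
    refine subsingleton_of_forall_eq 0 ?_
    rintro ⟨z, hz⟩
    obtain ⟨⟨x, hx⟩, rfl⟩ := Algebra.Extension.Cotangent.mk_surjective z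
    exact Subtype.ext ((Algebra.Extension.Cotangent.mk_eq_zero_iff _).2
      (h x (hker.le hx) ((cotangentComplex_mk_eq_zero_iff P hx).1 hz)))

theorem aeval_id_rename {R S T : Type*} [CommRing R] [CommRing S] [CommRing T] [Algebra R S]
    [Algebra R T] (f : S →ₐ[R] T) (q : MvPolynomial S R) :
    MvPolynomial.aeval id (MvPolynomial.rename f q) = f (MvPolynomial.aeval id q) := by
  rw [MvPolynomial.aeval_rename, MvPolynomial.comp_aeval_apply]
  rfl

-- The second-order vanishing criterion for `H1Cotangent` involves finitely many variables at a
-- time, which reduces it to a finitely generated subextension.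
theorem formallySmooth_of_perfectField (F L : Type*) [Field F] [PerfectField F] [Field L]
    [Algebra F L] : Algebra.FormallySmooth F L := by
  rw [Algebra.formallySmooth_iff]
  refine ⟨inferInstance, (subsingleton_h1Cotangent_iff F L).2 fun x hx hd => ?_⟩
  let E := IntermediateField.adjoin F (x.vars : Set L)
  have : Algebra.EssFiniteType F E :=
    IntermediateField.essFiniteType_iff.2 (IntermediateField.fg_adjoin_finset x.vars)
  have hE := (subsingleton_h1Cotangent_iff F E).1
    ((Algebra.formallySmooth_iff _ _).1 inferInstance).2
  obtain ⟨y, hy⟩ : ∃ y : MvPolynomial E F, MvPolynomial.rename E.val y = x :=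
    MvPolynomial.exists_rename_eq_of_vars_subset_range _ _ Subtype.val_injective fun i hi =>
      ⟨⟨i, IntermediateField.subset_adjoin F _ hi⟩, rfl⟩
  have hy_mem : y ∈ RingHom.ker (MvPolynomial.aeval (R := F) (id : E → E)) ^ 2 := by
    refine hE y ?_ fun i => ?_
    · rwa [← hy, aeval_id_rename, map_eq_zero] at hx
    · have hdi := hd (E.val i)
      rwa [← hy, MvPolynomial.pderiv_rename (f := E.val) Subtype.val_injective, aeval_id_rename,
        map_eq_zero] at hdi
  have hmap := Ideal.mem_map_of_mem (MvPolynomial.rename (R := F) E.val) hy_mem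
  rw [Ideal.map_pow, hy] at hmap
  refine Ideal.pow_right_mono (Ideal.map_le_iff_le_comap.2 fun z hz => ?_) 2 hmap
  rw [Ideal.mem_comap, RingHom.mem_ker, aeval_id_rename, RingHom.mem_ker.1 hz, map_zero]

theorem exists_ringHom_residue_comp_eq_id (p : ℕ) [Fact p.Prime] (R : Type*) [CommRing R]
    [IsLocalRing R] [CharP R p] [IsAdicComplete (maximalIdeal R) R] :
    ∃ σ : ResidueField R →+* R, (residue R).comp σ = RingHom.id _ := by
  let : Algebra (ZMod p) R := ZMod.algebra R p
  have : Algebra.FormallySmooth (ZMod p) (R ⧸ maximalIdeal R) :=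
    formallySmooth_of_perfectField (ZMod p) (ResidueField R)
  obtain ⟨σ, hσ⟩ := Algebra.FormallySmooth.exists_mkₐ_comp_eq_of_isAdicComplete (R := ZMod p)
    (I := maximalIdeal R) (AlgHom.id (ZMod p) (R ⧸ maximalIdeal R))
  exact ⟨σ.toRingHom, RingHom.ext fun a => DFunLike.congr_fun hσ a⟩

/-! ### Finite modules over complete rings and Noether normalization -/

theorem isPrecomplete_of_moduleFinite {A : Type*} (M : Type*) [CommRing A] (I : Ideal A)
    [IsPrecomplete I A] [AddCommGroup M] [Module A M] [Module.Finite A M] : IsPrecomplete I M := by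
  rw [← AdicCompletion.of_surjective_iff, ← LinearMap.range_eq_top, eq_top_iff]
  rintro z -
  obtain ⟨t, rfl⟩ := AdicCompletion.ofTensorProduct_surjective_of_finite I M z
  induction t with
  | zero => simp only [map_zero, zero_mem]
  | add x y hx hy => simpa only [map_add] using add_mem hx hy
  | tmul a x =>
    obtain ⟨a, rfl⟩ := AdicCompletion.of_surjective I A a
    rw [AdicCompletion.ofTensorProduct_tmul]
    exact ⟨a • x, AdicCompletion.ext fun n => rfl⟩

section FiniteOfComplete

variable {A R : Type*} [CommRing A] [CommRing R] [IsLocalRing R] [Algebra A R]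

theorem restrictScalars_span_le_span_sup
    (hres : ∀ r : R, ∃ a : A, r - algebraMap A R a ∈ maximalIdeal R) (s : Set R) :
    (Ideal.span s).restrictScalars A ≤
      Submodule.span A s ⊔ (maximalIdeal R * Ideal.span s).restrictScalars A := by
  intro x hx
  rw [Submodule.restrictScalars_mem] at hx
  induction hx using Submodule.span_induction with
  | mem x h => exact Submodule.mem_sup_left (Submodule.subset_span h)
  | zero => exact zero_mem _
  | add x y _ _ hx hy => exact add_mem hx hy
  | smul r x hxs hx =>
    obtain ⟨a, ha⟩ := hres r
    have hrx : r • x = a • x + (r - algebraMap A R a) * x := by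
      rw [Algebra.smul_def a, smul_eq_mul]; ring
    rw [hrx]
    exact add_mem (Submodule.smul_mem _ _ hx) (Submodule.mem_sup_right (Ideal.mul_mem_mul ha hxs))

theorem exists_span_sup_maximalIdeal_pow_eq_top [IsNoetherianRing R]
    (hres : ∀ r : R, ∃ a : A, r - algebraMap A R a ∈ maximalIdeal R) (n : ℕ) :
    ∃ s : Finset R, Submodule.span A (s : Set R) ⊔ (maximalIdeal R ^ n).restrictScalars A = ⊤ := by
  classical
  induction n with
  | zero => exact ⟨∅, by simp⟩
  | succ n ih =>
    obtain ⟨s, hs⟩ := ih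
    obtain ⟨g, hg⟩ := IsNoetherian.noetherian (maximalIdeal R ^ n)
    have hstep := restrictScalars_span_le_span_sup hres (g : Set R)
    rw [Ideal.span, hg, ← pow_succ'] at hstep
    refine ⟨s ∪ g, ?_⟩
    rw [eq_top_iff, ← hs, Finset.coe_union, Submodule.span_union, sup_assoc]
    exact sup_le_sup_left hstep _

theorem moduleFinite_of_isPrecomplete [IsNoetherianRing R] (I : Ideal A) [IsPrecomplete I A]
    (hres : ∀ r : R, ∃ a : A, r - algebraMap A R a ∈ maximalIdeal R)
    (hI : (I.map (algebraMap A R)).radical = maximalIdeal R) : Module.Finite A R := by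
  have hIne : I.map (algebraMap A R) ≠ ⊤ := by
    rw [ne_eq, ← Ideal.radical_eq_top, hI]
    exact Ideal.IsPrime.ne_top'
  have : IsHausdorff I R := IsHausdorff.map_algebraMap_iff.1 (IsHausdorff.of_isLocalRing _ R hIne)
  obtain ⟨n, hn⟩ := Ideal.exists_pow_le_of_le_radical_of_fg hI.ge (IsNoetherian.noetherian _)
  obtain ⟨s, hs⟩ := exists_span_sup_maximalIdeal_pow_eq_top hres n
  let f : (s → A) →ₗ[A] R := Fintype.linearCombination A fun i : s => (i : R)
  have : IsPrecomplete I (s → A) := isPrecomplete_of_moduleFinite _ I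
  refine Module.Finite.of_surjective f (surjective_of_mkQ_comp_surjective (I := I) fun y => ?_)
  obtain ⟨r, rfl⟩ := Submodule.mkQ_surjective _ y
  obtain ⟨u, hu, v, hv, rfl⟩ := Submodule.mem_sup.1 (hs.ge (Submodule.mem_top (x := r)))
  obtain ⟨c, rfl⟩ : u ∈ f.range := by
    rw [Fintype.range_linearCombination]
    simpa using hu
  refine ⟨c, ?_⟩
  rw [LinearMap.comp_apply, map_add, left_eq_add, Submodule.mkQ_apply,
    Submodule.Quotient.mk_eq_zero, Ideal.smul_top_eq_map]
  exact hn hv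

end FiniteOfComplete

theorem ringKrullDim_le_of_isIntegral (A R : Type*) [CommRing A] [CommRing R] [Algebra A R]
    [Algebra.IsIntegral A R] : ringKrullDim R ≤ ringKrullDim A :=
  Order.krullDim_le_of_strictMono (PrimeSpectrum.comap (algebraMap A R)) fun _ _ hPQ =>
    Ideal.IsIntegral.comap_lt_comap hPQ

theorem algebraMap_injective_of_ringKrullDim_le {A R : Type*} [CommRing A] [IsDomain A]
    [FiniteRingKrullDim A] [CommRing R] [Algebra A R] [Algebra.IsIntegral A R]
    (hdim : ringKrullDim A ≤ ringKrullDim R) : Function.Injective (algebraMap A R) := by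
  rw [injective_iff_map_eq_zero]
  intro a ha
  by_contra ha0
  have hsurj : Function.Surjective (algebraMap A (⊥ : Subalgebra A R)) := by
    rintro ⟨_, a, rfl⟩
    exact ⟨a, rfl⟩
  have : Algebra.IsIntegral (⊥ : Subalgebra A R) R := Algebra.IsIntegral.tower_top A
  have hlt : ringKrullDim R + 1 ≤ ringKrullDim A :=
    (add_le_add_left (ringKrullDim_le_of_isIntegral (⊥ : Subalgebra A R) R) 1).trans
      (ringKrullDim_succ_le_of_surjective _ hsurj (mem_nonZeroDivisors_of_ne_zero ha0)
        (Subtype.ext ha))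
  have hsucc : ringKrullDim A + 1 ≤ ringKrullDim A := (add_le_add_left hdim 1).trans hlt
  obtain ⟨n, hn⟩ := WithBot.ne_bot_iff_exists.1 (ringKrullDim_ne_bot (R := A))
  rw [← hn, ← WithBot.coe_one, ← WithBot.coe_add, WithBot.coe_le_coe] at hsucc
  have hntop : n ≠ ⊤ := by
    rintro rfl
    exact ringKrullDim_ne_top hn.symm
  exact (ENat.add_one_le_iff hntop).1 hsucc |>.false

theorem ringKrullDim_mvPowerSeries_le (σ k : Type*) [Finite σ] [Field k] :
    ringKrullDim (MvPowerSeries σ k) ≤ Nat.card σ := by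
  refine (ringKrullDim_le_spanFinrank_maximalIdeal _).trans ?_
  rw [maximalIdeal_mvPowerSeries]
  refine Nat.cast_le.2
    ((Submodule.spanFinrank_span_le_ncard_of_finite (Set.finite_range _)).trans ?_)
  rw [← Set.image_univ, ← Set.ncard_univ]
  exact Set.ncard_image_le

section LiftMvPowerSeries

open MvPowerSeries

variable {σ k R : Type*} [CommRing k] [CommRing R] {m : Ideal R} {y : σ → R}

theorem map_eval₂Hom_idealOfVars_pow_le (f : k →+* R) (hy : ∀ i, y i ∈ m) (n : ℕ) :
    (MvPolynomial.idealOfVars σ k ^ n).map (MvPolynomial.eval₂Hom f y) ≤ m ^ n := by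
  rw [Ideal.map_pow, Ideal.map_span, ← Set.range_comp]
  refine Ideal.pow_right_mono (Ideal.span_le.2 ?_) n
  rintro _ ⟨i, rfl⟩
  simpa using hy i

variable [Finite σ]

/-- The ring homomorphism from power series to `R ⧸ m ^ n` extending `f` and `X i ↦ y i`. -/
noncomputable def truncEval₂Hom (f : k →+* R) (hy : ∀ i, y i ∈ m) (n : ℕ) :
    MvPowerSeries σ k →+* R ⧸ m ^ n :=
  (Ideal.quotientMap (m ^ n) (MvPolynomial.eval₂Hom f y)
    (Ideal.map_le_iff_le_comap.1 (map_eval₂Hom_idealOfVars_pow_le f hy n))).comp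
    (truncTotalAlgHom σ k n).toRingHom

theorem truncEval₂Hom_apply (f : k →+* R) (hy : ∀ i, y i ∈ m) (n : ℕ) (g : MvPowerSeries σ k) :
    truncEval₂Hom f hy n g =
      Ideal.Quotient.mk (m ^ n) (MvPolynomial.eval₂Hom f y (truncTotal n g)) :=
  rfl

theorem factorPow_comp_truncEval₂Hom (f : k →+* R) (hy : ∀ i, y i ∈ m) {i j : ℕ} (hij : i ≤ j) :
    (Ideal.Quotient.factorPow m hij).comp (truncEval₂Hom (σ := σ) f hy j) =
      truncEval₂Hom f hy i := by
  ext g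
  rw [RingHom.comp_apply, truncEval₂Hom_apply, truncEval₂Hom_apply, Ideal.Quotient.factor_mk,
    Ideal.Quotient.mk_eq_mk_iff_sub_mem, ← map_sub]
  exact map_eval₂Hom_idealOfVars_pow_le f hy i (Ideal.mem_map_of_mem _
    (truncTotal_sub_truncTotal_mem_pow_idealOfVars hij le_rfl g))

theorem truncEval₂Hom_coe (f : k →+* R) (hy : ∀ i, y i ∈ m) (n : ℕ) (q : MvPolynomial σ k) :
    truncEval₂Hom f hy n (q : MvPowerSeries σ k) =
      Ideal.Quotient.mk (m ^ n) (MvPolynomial.eval₂Hom f y q) := by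
  rw [truncEval₂Hom_apply, Ideal.Quotient.mk_eq_mk_iff_sub_mem, ← map_sub]
  refine map_eval₂Hom_idealOfVars_pow_le f hy n (Ideal.mem_map_of_mem _
    ((MvPolynomial.mem_pow_idealOfVars_iff' ..).2 fun x hx => ?_))
  rw [MvPolynomial.coeff_sub, sub_eq_zero, coeff_truncTotal _ hx, MvPolynomial.coeff_coe]

theorem exists_mvPowerSeries_ringHom [IsAdicComplete m R] (f : k →+* R) (hy : ∀ i, y i ∈ m) :
    ∃ φ : MvPowerSeries σ k →+* R, (∀ c, φ (C c) = f c) ∧ ∀ i, φ (X i) = y i := by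
  let φ := IsAdicComplete.liftRingHom m (truncEval₂Hom (σ := σ) f hy)
    (factorPow_comp_truncEval₂Hom f hy)
  have hφ (q : MvPolynomial σ k) : φ q = MvPolynomial.eval₂Hom f y q := by
    rw [← sub_eq_zero]
    refine IsHausdorff.haus (I := m) inferInstance _ fun n => ?_
    rw [SModEq.zero, smul_eq_mul, Ideal.mul_top, ← Ideal.Quotient.eq_zero_iff_mem, map_sub,
      IsAdicComplete.mk_liftRingHom, truncEval₂Hom_coe, sub_self]
  refine ⟨φ, fun c => ?_, fun i => ?_⟩
  · rw [← MvPolynomial.coe_C, hφ, MvPolynomial.coe_eval₂Hom, MvPolynomial.eval₂_C]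
  · rw [← MvPolynomial.coe_X, hφ, MvPolynomial.coe_eval₂Hom, MvPolynomial.eval₂_X]

end LiftMvPowerSeries

theorem isAdicComplete_maximalIdeal_mvPowerSeries (σ k : Type*) [Finite σ] [Field k] :
    IsAdicComplete (maximalIdeal (MvPowerSeries σ k)) (MvPowerSeries σ k) := by
  rw [maximalIdeal_mvPowerSeries]
  infer_instance

open MvPowerSeries in
theorem exists_finite_injective_mvPowerSeries_ringHom (p : ℕ) [Fact p.Prime] {R σ : Type*}
    [CommRing R] [IsNoetherianRing R] [IsLocalRing R] [IsAdicComplete (maximalIdeal R) R]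
    [CharP R p] [Finite σ] {y : σ → R} (hdim : ringKrullDim R = Nat.card σ)
    (hrad : (Ideal.span (Set.range y)).radical = maximalIdeal R) :
    ∃ φ : MvPowerSeries σ (ResidueField R) →+* R,
      φ.Finite ∧ Function.Injective φ ∧ ∀ i, φ (X i) = y i := by
  obtain ⟨f, hf⟩ := exists_ringHom_residue_comp_eq_id p R
  have hy (i : σ) : y i ∈ maximalIdeal R :=
    hrad.le (Ideal.le_radical (Ideal.subset_span ⟨i, rfl⟩))
  obtain ⟨φ, hφC, hφX⟩ := exists_mvPowerSeries_ringHom f hy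
  let := φ.toAlgebra
  have := isAdicComplete_maximalIdeal_mvPowerSeries σ (ResidueField R)
  have hfin : Module.Finite (MvPowerSeries σ (ResidueField R)) R := by
    refine moduleFinite_of_isPrecomplete (maximalIdeal _) (fun r => ⟨C (residue R r), ?_⟩) ?_
    · rw [← residue_eq_zero_iff, map_sub, RingHom.algebraMap_toAlgebra, hφC, sub_eq_zero]
      exact (RingHom.congr_fun hf _).symm
    · rw [maximalIdeal_mvPowerSeries, Ideal.map_span, ← Set.range_comp, ← hrad]
      congr 3
      exact funext hφX
  have : IsDomain (MvPowerSeries σ (ResidueField R)) := NoZeroDivisors.to_isDomain _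
  refine ⟨φ, hfin, algebraMap_injective_of_ringKrullDim_le ?_, hφX⟩
  exact (ringKrullDim_mvPowerSeries_le σ _).trans hdim.ge

/-! ### Ideals of integral extensions of complete local rings -/

theorem eq_zero_or_one_of_isIdempotentElem_quotient {S : Type*} [CommRing S] [IsDomain S]
    {I : Ideal S} [HenselianRing S I] {e : S ⧸ I} (he : IsIdempotentElem e) :
    e = 0 ∨ e = 1 := by
  obtain ⟨s, rfl⟩ := Ideal.Quotient.mk_surjective e
  obtain ⟨a, ha, has⟩ := HenselianRing.is_henselian (I := I) (Polynomial.X ^ 2 - Polynomial.X)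
    (by monicity!) s
    (by rw [← Ideal.Quotient.eq_zero_iff_mem]; simp [pow_two, he.eq])
    (IsUnit.of_mul_eq_one (2 * Ideal.Quotient.mk I s - 1)
      (by
        simp only [Polynomial.derivative_X_pow_succ, Nat.cast_one, map_add, map_one, pow_one,
          Polynomial.derivative_X, Polynomial.eval_sub,
          Polynomial.eval_mul, Polynomial.eval_add, Polynomial.eval_one, Polynomial.eval_X,
          map_sub, map_mul]
        linear_combination 4 * he.eq))
  rw [← Ideal.Quotient.mk_eq_mk_iff_sub_mem] at has
  have hidem : IsIdempotentElem a := by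
    simpa [Polynomial.IsRoot, IsIdempotentElem, sub_eq_zero, pow_two] using ha
  rw [← has]
  exact (IsIdempotentElem.iff_eq_zero_or_one.1 hidem).imp (by rintro rfl; exact map_zero _)
    (by rintro rfl; exact map_one _)

-- The chain of ideals `(b ^ n)` stabilises, so some `(b ^ n)` is generated by an idempotent.
theorem isUnit_or_isNilpotent_of_isArtinianRing {B : Type*} [CommRing B] [IsArtinianRing B]
    (hB : ∀ e : B, IsIdempotentElem e → e = 0 ∨ e = 1) (b : B) : IsUnit b ∨ IsNilpotent b := by
  obtain ⟨n, c, hc⟩ := IsArtinian.exists_pow_succ_smul_dvd b (1 : B)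
  simp only [smul_eq_mul, mul_one, Nat.succ_eq_add_one] at hc
  have hpow (j : ℕ) : b ^ n = b ^ (n + j) * c ^ j := by
    induction j with
    | zero => simp
    | succ j ih =>
      calc b ^ n = b ^ j * b ^ n * c ^ j := by rw [← pow_add, add_comm j n, ← ih]
        _ = b ^ j * (b ^ (n + 1) * c) * c ^ j := by rw [hc]
        _ = b ^ (n + (j + 1)) * c ^ (j + 1) := by ring
  set e := b ^ (n + 1) * c ^ (n + 1) with he
  have hbe : b ^ (n + 1) = b ^ (n + 1) * e := by
    calc b ^ (n + 1) = b ^ n * b := pow_succ b n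
      _ = b ^ (n + (n + 1)) * c ^ (n + 1) * b := by rw [← hpow]
      _ = b ^ (n + 1) * e := by rw [he]; ring
  have hidem : IsIdempotentElem e := by
    calc e * e = b ^ (n + 1) * e * c ^ (n + 1) := by rw [he]; ring
      _ = e := by rw [← hbe]
  rcases hB e hidem with h0 | h1
  · exact .inr ⟨n + 1, by rw [hbe, h0, mul_zero]⟩
  · exact .inl (isUnit_of_dvd_one (h1 ▸ (dvd_pow_self b n.succ_ne_zero).mul_right _))

theorem exists_pow_mem_map_maximalIdeal {R S : Type*} [CommRing R] [IsNoetherianRing R]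
    [IsLocalRing R] [IsAdicComplete (maximalIdeal R) R] [CommRing S] [IsDomain S] [Algebra R S]
    [Module.Finite R S] {t : S} (ht : ¬ IsUnit t) :
    ∃ n, t ^ n ∈ (maximalIdeal R).map (algebraMap R S) := by
  set I := (maximalIdeal R).map (algebraMap R S)
  have : IsPrecomplete (maximalIdeal R) S := isPrecomplete_of_moduleFinite S _
  have : IsAdicComplete I S := (IsAdicComplete.map_algebraMap_iff _ _).2 { }
  have : IsArtinianRing (R ⧸ maximalIdeal R) := inferInstanceAs (IsArtinianRing (ResidueField R))
  have : IsArtinianRing (S ⧸ I) := .of_finite (R ⧸ maximalIdeal R) _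
  have := isLocalHom_of_le_jacobson_bot I (IsAdicComplete.le_jacobson_bot I)
  obtain hunit | ⟨n, hn⟩ := isUnit_or_isNilpotent_of_isArtinianRing
    (fun _ => eq_zero_or_one_of_isIdempotentElem_quotient) (Ideal.Quotient.mk I t)
  · exact absurd (IsUnit.of_map _ t hunit) ht
  · exact ⟨n, Ideal.Quotient.eq_zero_iff_mem.1 (by rw [map_pow, hn])⟩

theorem exists_pow_le_map_maximalIdeal {A T : Type*} [CommRing A] [IsNoetherianRing A]
    [IsLocalRing A] [IsAdicComplete (maximalIdeal A) A] [CommRing T] [IsDomain T] [Algebra A T]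
    [Algebra.IsIntegral A T] {J : Ideal T} (hJ : J ≠ ⊤) (hfg : J.FG) :
    ∃ q, J ^ q ≤ (maximalIdeal A).map (algebraMap A T) := by
  refine Ideal.exists_pow_le_of_le_radical_of_fg (fun t ht => ?_) hfg
  let S := Algebra.adjoin A {t}
  have : Module.Finite A S :=
    Algebra.finite_adjoin_simple_of_isIntegral (Algebra.IsIntegral.isIntegral t)
  have hunit : ¬ IsUnit (⟨t, Algebra.self_mem_adjoin_singleton A t⟩ : S) := fun h =>
    hJ (Ideal.eq_top_of_isUnit_mem _ ht (h.map S.val))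
  obtain ⟨n, hn⟩ := exists_pow_mem_map_maximalIdeal (R := A) hunit
  have hmap := Ideal.mem_map_of_mem (algebraMap S T) hn
  rw [Ideal.map_map, ← IsScalarTower.algebraMap_eq] at hmap
  exact ⟨n, hmap⟩

theorem IsFrobeniusLocallyProjective.iInf_map_sup_pow_eq {p : ℕ} [Fact p.Prime] {A T : Type*}
    (K Ω : Type*) [CommRing A] [IsDomain A] [IsNoetherianRing A] [IsLocalRing A] [CharP A p]
    [IsAdicComplete (maximalIdeal A) A] [Field K] [Algebra A K] [IsFractionRing A K]
    [Field Ω] [Algebra K Ω] [Algebra A Ω] [IsScalarTower A K Ω] [IsAlgClosed Ω]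
    [Algebra.IsAlgebraic K Ω] [CommRing T] [Algebra A T] [Algebra T Ω] [IsScalarTower A T Ω]
    [IsIntegralClosure T A Ω] (hA : IsFrobeniusLocallyProjective p A) (I : Ideal A)
    {J : Ideal T} (hJ : J ≠ ⊤) (hfg : J.FG) :
    ⨅ (N : ℕ) (_ : 0 < N), (I.map (algebraMap A T) ⊔ J ^ N) = I.map (algebraMap A T) := by
  refine le_antisymm (fun u hu => ?_) (le_iInf₂ fun _ _ => le_sup_left)
  have : IsDomain T := (IsIntegralClosure.algebraMap_injective T A Ω).isDomain
  have : Algebra.IsIntegral A T := IsIntegralClosure.isIntegral_algebra A Ω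
  obtain ⟨q, hq⟩ := exists_pow_le_map_maximalIdeal (A := A) hJ hfg
  refine hA.mem_map_of_forall_mem_map_sup K Ω fun N => ?_
  have hJN : J ^ (q * N + 1) ≤ (maximalIdeal A ^ N).map (algebraMap A T) :=
    calc J ^ (q * N + 1) ≤ (J ^ q) ^ N := pow_mul J q N ▸ Ideal.pow_le_pow_right (Nat.le_succ _)
      _ ≤ (maximalIdeal A).map (algebraMap A T) ^ N := Ideal.pow_right_mono hq N
      _ = (maximalIdeal A ^ N).map (algebraMap A T) := (Ideal.map_pow _ _ _).symm
  rw [Ideal.map_sup]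
  refine sup_le_sup_left hJN _ ?_
  simp only [Ideal.mem_iInf] at hu
  exact hu (q * N + 1) (Nat.succ_pos _)

theorem isIntegralClosure_integralClosure_of_isIntegral (A R Ω : Type*) [CommRing A] [CommRing R]
    [CommRing Ω] [Algebra A R] [Algebra R Ω] [Algebra A Ω] [IsScalarTower A R Ω]
    [Algebra.IsIntegral A R] : IsIntegralClosure (integralClosure R Ω) A Ω where
  algebraMap_injective := Subtype.val_injective
  isIntegral_iff {x} :=
    ⟨fun hx => ⟨⟨x, hx.tower_top⟩, rfl⟩, by rintro ⟨y, rfl⟩; exact isIntegral_trans (R := A) _ y.2⟩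

theorem IsFrobeniusLocallyProjective.iInf_map_RPlus_sup_pow_eq {p : ℕ} [Fact p.Prime]
    {A : Type*} {R : Type} [CommRing A] [IsDomain A] [IsNoetherianRing A] [IsLocalRing A]
    [CharP A p] [IsAdicComplete (maximalIdeal A) A] [CommRing R] [IsDomain R] [Algebra A R]
    [FaithfulSMul A R] [Algebra.IsIntegral A R] (hA : IsFrobeniusLocallyProjective p A)
    (I : Ideal A) {J : Ideal (RPlus R)} (hJ : J ≠ ⊤) (hfg : J.FG) :
    ⨅ (N : ℕ) (_ : 0 < N), (I.map (algebraMap A (RPlus R)) ⊔ J ^ N) =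
      I.map (algebraMap A (RPlus R)) := by
  let Ω := AlgebraicClosure (FractionRing R)
  have : FaithfulSMul R Ω := .trans R (FractionRing R) Ω
  have : FaithfulSMul A Ω := .trans A R Ω
  let := FractionRing.liftAlgebra A Ω
  have : Algebra.IsAlgebraic R Ω :=
    (IsFractionRing.comap_isAlgebraic_iff (K := FractionRing R)).2 inferInstance
  have : Algebra.IsAlgebraic A Ω := .trans A R Ω
  have : Algebra.IsAlgebraic (FractionRing A) Ω := IsFractionRing.comap_isAlgebraic_iff.1 this
  have := isIntegralClosure_integralClosure_of_isIntegral A R Ω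
  exact hA.iInf_map_sup_pow_eq (FractionRing A) Ω I hJ hfg

/-- For a complete local domain `R` of prime characteristic `p`, part of a
system of parameters `x₁, …, xₙ` and a proper finitely generated ideal `J` of `R⁺`,
`⋂_{N ≥ 1} ((x₁, …, xₙ)R⁺ + J^N) = (x₁, …, xₙ)R⁺`. -/
theorem stmt8 (R : Type) [CommRing R] [IsDomain R] [IsNoetherianRing R] [IsLocalRing R]
    [IsAdicComplete (maximalIdeal R) R]
    (p : ℕ) [Fact p.Prime] [CharP R p]
    (n : ℕ) (x : Fin n → R) (hx : IsPartialSOP R x)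
    (J : Ideal (RPlus R)) (hJ : J ≠ ⊤) (hJfg : J.FG) :
    (⨅ (N : ℕ) (_ : 0 < N),
        (Ideal.map (algebraMap R (RPlus R)) (Ideal.span (Set.range x)) ⊔ J ^ N)) =
      Ideal.map (algebraMap R (RPlus R)) (Ideal.span (Set.range x)) := by
  obtain ⟨d, hd, y, ⟨hdim, hrad⟩, hyx⟩ := hx
  obtain ⟨φ, hfin, hinj, hφ⟩ := exists_finite_injective_mvPowerSeries_ringHom p
    (hdim.trans (by rw [Nat.card_fin])) hrad
  let A := MvPowerSeries (Fin d) (ResidueField R)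
  let := φ.toAlgebra
  have : Module.Finite A R := hfin
  have : FaithfulSMul A R := (faithfulSMul_iff_algebraMap_injective A R).2 hinj
  have : IsDomain A := NoZeroDivisors.to_isDomain A
  have : CharP A p := φ.charP hinj p
  have : CharP (ResidueField R) p :=
    (MvPowerSeries.C (σ := Fin d)).charP MvPowerSeries.C_injective p
  have := isAdicComplete_maximalIdeal_mvPowerSeries (Fin d) (ResidueField R)
  let I : Ideal A := Ideal.span (Set.range fun i : Fin n => MvPowerSeries.X (Fin.castLE hd i))
  have hI : I.map (algebraMap A R) = Ideal.span (Set.range x) := by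
    rw [Ideal.map_span, ← Set.range_comp]
    exact congr_arg (fun z => Ideal.span (Set.range z)) (funext fun i => (hφ _).trans (hyx i))
  rw [← hI, Ideal.map_map, ← IsScalarTower.algebraMap_eq A R (RPlus R)]
  exact (isFrobeniusLocallyProjective_mvPowerSeries p _ _).iInf_map_RPlus_sup_pow_eq I hJ hJfg
end

section
/- Let (B, m_B) be a quasilocal ring (a commutative ring, not necessarily Noetherian, with a unique maximal ideal m_B), and let x, y ∈ m_B be a permutable regular sequence on B (i.e., both x, y and y, x are regular sequences on B). Let t be an indeterminate and let B(t) be the localization of B[t] at the prime ideal m_B·B[t]. Then for every positive integer N, (x − y t, y^N)B(t) ∩ B[t] = (x − y t, y^N)B[t]. -/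
open IsLocalRing TensorProduct
set_option synthInstance.maxHeartbeats 1000000
set_option maxHeartbeats 1000000

/-!
Work in `T = B[t]/(x - yt)`. Since `y, x` is a regular sequence on `B`, so is `y, x - yt` on `B[t]`,
and therefore `y` is a nonzerodivisor on `T`. Moreover `(x - yt, y)B[t]` is extended from the ideal
`(x, y)` of `B`, so by McCoy's theorem every polynomial with unit content is a nonzerodivisor on
`T/yT`. Peeling off one factor `y` at a time, such a polynomial is a nonzerodivisor on `T/y^N T`,
so inverting all of them adds nothing to `(x - yt, y^N)B[t]` after contraction.
-/

section RegularPair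

open Ideal RingTheory.Sequence

theorem pow_dvd_of_pow_dvd_mul {T : Type*} [CommMonoid T] {y f : T} (hy : IsLeftRegular y)
    (hf : ∀ g, y ∣ f * g → y ∣ g) (n : ℕ) {g : T} (h : y ^ n ∣ f * g) : y ^ n ∣ g := by
  induction n generalizing g with
  | zero => simp only [pow_zero, one_dvd]
  | succ n ih =>
    obtain ⟨c, hc⟩ := h
    obtain ⟨g', rfl⟩ := hf g ⟨y ^ n * c, by rw [hc, pow_succ', mul_assoc]⟩
    have cancelled : f * g' = y ^ n * c := hy <| by
      simpa only [pow_succ', mul_assoc, mul_left_comm f y] using hc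
    rw [pow_succ']
    exact mul_dvd_mul_left y (ih ⟨c, cancelled⟩)

variable {R : Type*} [CommRing R]

theorem isWeaklyRegular_pair_iff {y a : R} :
    IsWeaklyRegular R [y, a] ↔ IsLeftRegular y ∧ ∀ d, y ∣ a * d → y ∣ d := by
  rw [isWeaklyRegular_cons_iff, isWeaklyRegular_singleton_iff,
    isSMulRegular_quotient_iff_mem_of_smul_mem]
  simp only [Submodule.mem_smul_pointwise_iff_exists, Submodule.mem_top, true_and, smul_eq_mul,
    dvd_def, eq_comm]
  rfl

theorem mem_span_pair_iff_mk_dvd_mk {a b g : R} :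
    g ∈ span {a, b} ↔ Ideal.Quotient.mk (span {a}) b ∣ Ideal.Quotient.mk (span {a}) g := by
  rw [← mem_span_singleton, ← Set.image_singleton, ← map_span, mem_quotient_iff_mem_sup, sup_comm,
    span_insert]

theorem isLeftRegular_mk_of_isWeaklyRegular {a y : R} (h : IsWeaklyRegular R [y, a]) :
    IsLeftRegular (Ideal.Quotient.mk (span {a}) y) := by
  obtain ⟨hy, ha⟩ := isWeaklyRegular_pair_iff.1 h
  rw [isLeftRegular_iff_right_eq_zero_of_mul, Ideal.Quotient.mk_surjective.forall]
  intro b hb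
  rw [← map_mul, Ideal.Quotient.eq_zero_iff_dvd] at hb
  obtain ⟨c, hc⟩ := hb
  obtain ⟨c', rfl⟩ := ha c ⟨b, hc.symm⟩
  exact (Ideal.Quotient.eq_zero_iff_dvd _ _).2 ⟨c', hy (hc.trans (mul_left_comm a y c'))⟩

theorem isSMulRegular_quotient_span_pair_iff {a b f : R} :
    IsSMulRegular (R ⧸ span {a, b}) f ↔ ∀ g : R ⧸ span {a},
      Ideal.Quotient.mk (span {a}) b ∣ Ideal.Quotient.mk (span {a}) f * g →
        Ideal.Quotient.mk (span {a}) b ∣ g := by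
  simp only [isSMulRegular_quotient_iff_mem_of_smul_mem, smul_eq_mul, mem_span_pair_iff_mk_dvd_mk,
    map_mul, Ideal.Quotient.mk_surjective.forall]

theorem isSMulRegular_quotient_span_pair_pow {a y f : R} (h : IsWeaklyRegular R [y, a])
    (hf : IsSMulRegular (R ⧸ span {a, y}) f) (n : ℕ) :
    IsSMulRegular (R ⧸ span {a, y ^ n}) f := by
  rw [isSMulRegular_quotient_span_pair_iff] at hf ⊢
  intro g
  rw [map_pow]
  exact pow_dvd_of_pow_dvd_mul (isLeftRegular_mk_of_isWeaklyRegular h) hf n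

theorem comap_map_algebraMap_of_isSMulRegular (S : Submonoid R) (A : Type*) [CommRing A]
    [Algebra R A] [IsLocalization S A] {I : Ideal R} (hS : ∀ f ∈ S, IsSMulRegular (R ⧸ I) f) :
    (I.map (algebraMap R A)).comap (algebraMap R A) = I := by
  refine le_antisymm (fun g hg ↦ ?_) le_comap_map
  rw [mem_comap, IsLocalization.algebraMap_mem_map_algebraMap_iff S] at hg
  obtain ⟨f, hfS, hfg⟩ := hg
  exact mem_of_isSMulRegular_quotient_of_smul_mem (hS f hfS) hfg

end RegularPair

section Polynomial

open Ideal Polynomial RingTheory.Sequence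
open scoped nonZeroDivisors

variable {B : Type*} [CommRing B]

theorem mem_nonZeroDivisors_of_contentIdeal_eq_top {f : B[X]} (hf : f.contentIdeal = ⊤) :
    f ∈ B[X]⁰ := by
  rw [Polynomial.mem_nonZeroDivisors_iff]
  intro a ha
  have contentIdeal_le_ker : f.contentIdeal ≤ LinearMap.ker (LinearMap.mulLeft B a) := by
    rw [contentIdeal_def, span_le]
    intro c hc
    obtain ⟨n, -, rfl⟩ := mem_coeffs_iff.1 hc
    exact (coeff_smul a f n).symm.trans (by rw [ha, coeff_zero])
  rw [hf] at contentIdeal_le_ker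
  exact (mul_one a).symm.trans (contentIdeal_le_ker Submodule.mem_top)

theorem isSMulRegular_quotient_map_C {f : B[X]} (hf : f.contentIdeal = ⊤) (J : Ideal B) :
    IsSMulRegular (B[X] ⧸ J.map C) f := by
  have hf_map : f.map (Ideal.Quotient.mk J) ∈ (B ⧸ J)[X]⁰ :=
    mem_nonZeroDivisors_of_contentIdeal_eq_top <| by
      rw [contentIdeal_map_eq_map_contentIdeal, hf, Ideal.map_top]
  have mem_map_C_iff_map_eq_zero (g : B[X]) :
      g ∈ J.map C ↔ g.map (Ideal.Quotient.mk J) = 0 := by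
    rw [← coe_mapRingHom, ← RingHom.mem_ker, ker_mapRingHom, mk_ker]
  rw [isSMulRegular_quotient_iff_mem_of_smul_mem]
  intro g hfg
  rw [mem_map_C_iff_map_eq_zero] at hfg ⊢
  rwa [smul_eq_mul, Polynomial.map_mul, mul_left_mem_nonZeroDivisors_eq_zero_iff hf_map] at hfg

theorem span_C_sub_C_mul_X_C (x y : B) :
    span {C x - C y * X, C y} = (span {x, y}).map C := by
  rw [map_span, Set.image_pair, sub_eq_add_neg, ← mul_neg, span_pair_add_right_mul]

theorem isWeaklyRegular_C_C_sub_C_mul_X {x y : B} (h : IsWeaklyRegular B [y, x]) :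
    IsWeaklyRegular B[X] [C y, C x - C y * X] := by
  rw [isWeaklyRegular_pair_iff] at h ⊢
  obtain ⟨hy, hx⟩ := h
  constructor
  · simpa only [IsSMulRegular, IsLeftRegular, smul_eq_C_mul] using hy.isSMulRegular.polynomial
  · intro d hd
    have C_dvd : C y ∣ C x * d := by
      rw [sub_mul, mul_assoc] at hd
      exact (dvd_sub_left (dvd_mul_right _ _)).1 hd
    rw [C_dvd_iff_dvd_coeff] at C_dvd ⊢
    exact fun i ↦ hx _ (by simpa only [coeff_C_mul] using C_dvd i)

theorem contentIdeal_eq_top_of_notMem_map_C_maximalIdeal [IsLocalRing B] {f : B[X]}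
    (hf : f ∉ (maximalIdeal B).map C) : f.contentIdeal = ⊤ := by
  contrapose! hf
  exact mem_map_C_iff.2 fun n ↦ le_maximalIdeal hf (f.coeff_mem_contentIdeal n)

theorem stmt10_general {x y : B} (h : IsWeaklyRegular B [y, x]) (S : Submonoid B[X])
    (hS : ∀ f ∈ S, f.contentIdeal = ⊤) (A : Type*) [CommRing A] [Algebra B[X] A]
    [IsLocalization S A] (N : ℕ) :
    ((span {C x - C y * X, C y ^ N}).map (algebraMap B[X] A)).comap (algebraMap B[X] A) =
      span {C x - C y * X, C y ^ N} := by
  refine comap_map_algebraMap_of_isSMulRegular S A fun f hf ↦ ?_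
  apply isSMulRegular_quotient_span_pair_pow (isWeaklyRegular_C_C_sub_C_mul_X h)
  rw [span_C_sub_C_mul_X_C]
  exact isSMulRegular_quotient_map_C (hS f hf) _

end Polynomial

/-- For a quasilocal ring `B` and a permutable regular sequence `x, y` in the
maximal ideal, `(x - yt, y^N)B(t) ∩ B[t] = (x - yt, y^N)B[t]`, where `B(t)` is the
localization of `B[t]` at `m_B·B[t]`. -/
theorem stmt10 (B : Type) [CommRing B] [IsLocalRing B] (x y : B)
    (hx : x ∈ maximalIdeal B) (hy : y ∈ maximalIdeal B)
    (hreg : RingTheory.Sequence.IsRegular B [x, y])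
    (hreg' : RingTheory.Sequence.IsRegular B [y, x])
    [hP : (Ideal.map (Polynomial.C (R := B)) (maximalIdeal B)).IsPrime]
    (N : ℕ) (hN : 0 < N) :
    Ideal.comap
        (algebraMap (Polynomial B)
          (Localization.AtPrime (Ideal.map Polynomial.C (maximalIdeal B))))
        (Ideal.map
          (algebraMap (Polynomial B)
            (Localization.AtPrime (Ideal.map Polynomial.C (maximalIdeal B))))
          (Ideal.span {Polynomial.C x - Polynomial.C y * Polynomial.X,
            Polynomial.C y ^ N})) =
      Ideal.span {Polynomial.C x - Polynomial.C y * Polynomial.X, Polynomial.C y ^ N} := by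
  exact stmt10_general hreg'.toIsWeaklyRegular (Ideal.map Polynomial.C (maximalIdeal B)).primeCompl
    (fun _ ↦ contentIdeal_eq_top_of_notMem_map_C_maximalIdeal) _ N
end

section
/- Let (B, m_B) be a quasilocal ring (a commutative ring, not necessarily Noetherian, with a unique maximal ideal m_B), and let x, y ∈ m_B be a permutable regular sequence on B (i.e., both x, y and y, x are regular sequences on B). Let t be an indeterminate. Then for every positive integer N, (x − y t, y^N)B[t] ∩ B = (x, y)^N B, where the intersection with B is taken via the inclusion of constants B ⊆ B[t]. -/
open IsLocalRing TensorProduct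
set_option synthInstance.maxHeartbeats 1000000
set_option maxHeartbeats 1000000

/-!
Put `I = (x, y)`. Modulo `x - y t` the element `x` is a multiple of `y`, so `I ^ N` lands in
`(x - y t, y ^ N)`. Conversely, suppose `b = (x - y t) f + y ^ N g` with `b` constant. Comparing
coefficients of `t ^ (i + 1)` gives `y fᵢ ≡ x fᵢ₊₁` modulo `I ^ N`. Since `y, x` is a regular
sequence, `I ^ N : y = I ^ (N - 1)`, so starting from the vanishing coefficients of `f` in large
degree, every `fᵢ` lies in `I ^ (N - 1)`. Hence `b = x f₀ + y ^ N g₀` lies in `I ^ N`.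
-/

open Polynomial RingTheory.Sequence

theorem add_pow_succ_eq_pow_succ_add_mul {α : Type*} [IdemCommSemiring α] (a b : α) (n : ℕ) :
    (a + b) ^ (n + 1) = a ^ (n + 1) + b * (a + b) ^ n := by
  induction n with
  | zero => simp
  | succ n ih =>
    have absorb : a * (b * (a + b) ^ n) ≤ b * (a + b) ^ (n + 1) := by
      rw [mul_left_comm, pow_succ']
      gcongr
      exact le_self_add
    calc (a + b) ^ (n + 1 + 1)
        = a * (a + b) ^ (n + 1) + b * (a + b) ^ (n + 1) := by rw [pow_succ', add_mul]
      _ = a ^ (n + 1 + 1) + (a * (b * (a + b) ^ n) + b * (a + b) ^ (n + 1)) := by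
          nth_rw 1 [ih]
          ring
      _ = a ^ (n + 1 + 1) + b * (a + b) ^ (n + 1) := by
          rw [add_eq_right_iff_le.mpr absorb]

theorem sup_pow_le_pow_sup {R : Type*} [CommSemiring R] (I J : Ideal R) (n : ℕ) :
    (I ⊔ J) ^ n ≤ I ^ n ⊔ J := by
  cases n with
  | zero => simp
  | succ n =>
    rw [← Ideal.add_eq_sup, add_pow_succ_eq_pow_succ_add_mul]
    exact sup_le_sup_left Ideal.mul_le_left _

theorem coeff_mem_of_forall_coeff_succ_mem {R : Type*} [Semiring R] {J : Ideal R} {f : R[X]}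
    (hf : ∀ i, f.coeff (i + 1) ∈ J → f.coeff i ∈ J) (i : ℕ) : f.coeff i ∈ J := by
  obtain hi | hi := le_total i (f.natDegree + 1)
  · induction hi using Nat.decreasingInduction with
    | self => simp
    | of_succ k _ ih => exact hf k ih
  · simp [coeff_eq_zero_of_natDegree_lt hi]

section CommSemiring

variable {B : Type*} [CommSemiring B] {x y : B}

theorem mem_span_pair_pow_succ_iff {n : ℕ} {z : B} :
    z ∈ Ideal.span {x, y} ^ (n + 1) ↔
      ∃ c, ∃ u ∈ Ideal.span {x, y} ^ n, z = x ^ (n + 1) * c + y * u := by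
  rw [Ideal.span_insert, ← Ideal.add_eq_sup, add_pow_succ_eq_pow_succ_add_mul,
    Ideal.span_singleton_pow, Ideal.add_eq_sup, Submodule.mem_sup]
  simp only [Ideal.mem_span_singleton, Ideal.mem_span_singleton_mul, dvd_def]
  grind

theorem mul_add_pow_mul_mem_span_pair_pow_succ {n : ℕ} {a : B}
    (ha : a ∈ Ideal.span {x, y} ^ n) (c : B) :
    x * a + y ^ (n + 1) * c ∈ Ideal.span {x, y} ^ (n + 1) := by
  refine add_mem ?_ (Ideal.mul_mem_right _ _ (Ideal.pow_mem_pow (Ideal.subset_span (by simp)) _))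
  rw [pow_succ']
  exact Ideal.mul_mem_mul (Ideal.subset_span (by simp)) ha

end CommSemiring

section CommRing

variable {B : Type*} [CommRing B] {x y : B}

theorem dvd_of_dvd_pow_mul_of_isWeaklyRegular (h : IsWeaklyRegular B [y, x]) {k : ℕ} {c : B}
    (hc : y ∣ x ^ k * c) : y ∣ c := by
  rw [isWeaklyRegular_cons_iff, isWeaklyRegular_singleton_iff] at h
  have mem_of_mem := mem_of_isSMulRegular_quotient_of_smul_mem (h.2.pow k) (x := c)
  simp only [← Submodule.ideal_span_singleton_smul, smul_eq_mul, Ideal.mul_top,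
    Ideal.mem_span_singleton] at mem_of_mem
  exact mem_of_mem hc

theorem mem_span_pair_pow_of_mul_mem (h : IsWeaklyRegular B [y, x]) {n : ℕ} {a : B}
    (ha : y * a ∈ Ideal.span {x, y} ^ (n + 1)) : a ∈ Ideal.span {x, y} ^ n := by
  obtain ⟨c, u, hu, hya⟩ := mem_span_pair_pow_succ_iff.mp ha
  obtain ⟨d, rfl⟩ : y ∣ c :=
    dvd_of_dvd_pow_mul_of_isWeaklyRegular h (k := n + 1) ⟨a - u, by linear_combination -hya⟩
  have hy : IsSMulRegular B y := ((isWeaklyRegular_cons_iff B y [x]).mp h).1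
  have a_eq : a = x ^ n * (x * d) + u :=
    hy (by simp only [smul_eq_mul]; linear_combination hya)
  rw [a_eq]
  exact add_mem (Ideal.mul_mem_right _ _ (Ideal.pow_mem_pow (Ideal.subset_span (by simp)) n)) hu

theorem coeff_mem_span_pair_pow_of_C_eq (h : IsWeaklyRegular B [y, x]) {n : ℕ} {b : B}
    {f g : B[X]} (hb : f * (C x - C y * X) + g * C y ^ (n + 1) = C b) (i : ℕ) :
    f.coeff i ∈ Ideal.span {x, y} ^ n := by
  refine coeff_mem_of_forall_coeff_succ_mem (fun i hi ↦ mem_span_pair_pow_of_mul_mem h ?_) i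
  have coeff_eq : y * f.coeff i = x * f.coeff (i + 1) + y ^ (n + 1) * g.coeff (i + 1) := by
    have := congrArg (coeff · (i + 1)) hb
    simp only [mul_sub, ← mul_assoc, ← C_pow, coeff_add, coeff_sub, coeff_mul_X, coeff_mul_C,
      coeff_C_succ] at this
    linear_combination -this
  rw [coeff_eq]
  exact mul_add_pow_mul_mem_span_pair_pow_succ hi _

theorem comap_C_span_pair_le_span_pair_pow (h : IsWeaklyRegular B [y, x]) (N : ℕ) :
    Ideal.comap C (Ideal.span {C x - C y * X, C y ^ N}) ≤ Ideal.span {x, y} ^ N := by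
  cases N with
  | zero => simp
  | succ n =>
    intro b hb
    obtain ⟨f, g, hfg⟩ := Ideal.mem_span_pair.mp hb
    have b_eq : b = x * f.coeff 0 + y ^ (n + 1) * g.coeff 0 := by
      have := congrArg (coeff · 0) hfg
      simp only [mul_sub, ← mul_assoc, ← C_pow, coeff_add, coeff_sub, coeff_mul_X_zero,
        coeff_mul_C, coeff_C_zero] at this
      linear_combination -this
    rw [b_eq]
    exact mul_add_pow_mul_mem_span_pair_pow_succ (coeff_mem_span_pair_pow_of_C_eq h hfg 0) _

variable (x y) in
theorem span_pair_pow_le_comap_C_span_pair (N : ℕ) :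
    Ideal.span {x, y} ^ N ≤ Ideal.comap C (Ideal.span {C x - C y * X, C y ^ N}) := by
  have map_le : Ideal.map C (Ideal.span {x, y}) ≤
      Ideal.span {C y} ⊔ Ideal.span {C x - C y * X} := by
    rw [Ideal.map_span, Set.image_pair, ← Ideal.span_insert, Ideal.span_le, Set.pair_subset_iff]
    exact ⟨Ideal.mem_span_pair.mpr ⟨X, 1, by ring⟩, Ideal.subset_span (by simp)⟩
  rw [← Ideal.map_le_iff_le_comap, Ideal.map_pow]
  calc Ideal.map C (Ideal.span {x, y}) ^ N
      ≤ (Ideal.span {C y} ⊔ Ideal.span {C x - C y * X}) ^ N := Ideal.pow_right_mono map_le N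
    _ ≤ Ideal.span {C y} ^ N ⊔ Ideal.span {C x - C y * X} := sup_pow_le_pow_sup _ _ N
    _ = Ideal.span {C x - C y * X, C y ^ N} := by
      rw [Ideal.span_singleton_pow, sup_comm, ← Ideal.span_insert]

theorem stmt11_general (h : IsWeaklyRegular B [y, x]) (N : ℕ) :
    Ideal.comap C (Ideal.span {C x - C y * X, C y ^ N}) = Ideal.span {x, y} ^ N :=
  le_antisymm (comap_C_span_pair_le_span_pair_pow h N) (span_pair_pow_le_comap_C_span_pair x y N)

end CommRing

/-- For a quasilocal ring `B` and a permutable regular sequence `x, y` in the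
maximal ideal, `(x - yt, y^N)B[t] ∩ B = (x, y)^N B`. -/
theorem stmt11 (B : Type) [CommRing B] [IsLocalRing B] (x y : B)
    (hx : x ∈ maximalIdeal B) (hy : y ∈ maximalIdeal B)
    (hreg : RingTheory.Sequence.IsRegular B [x, y])
    (hreg' : RingTheory.Sequence.IsRegular B [y, x])
    (N : ℕ) (hN : 0 < N) :
    Ideal.comap (Polynomial.C (R := B))
        (Ideal.span {Polynomial.C x - Polynomial.C y * Polynomial.X,
          Polynomial.C y ^ N}) =
      Ideal.span {x, y} ^ N :=
  stmt11_general hreg'.toIsWeaklyRegular N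
end
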